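/- arXiv:0804.1945 — 2 statements merged into one kernel-verified Lean document; each statement's English description precedes it below -/
import Mathlib

section
/- Let A be a commutative unital Banach algebra over ℂ with a set of generators Λ, let X(Λ) be the set of functions Λ → ℂ with the product topology, let χ : M(A) → X(Λ) be the evaluation embedding, and let P_Λ be the smallest algebra of functions X(Λ) → ℂ (under pointwise operations) containing the constants and all coordinate projections π_λ(f) = f(λ), λ ∈ Λ. If f ∈ X(Λ) satisfies |p(f)| ≤ max{ |p(α)| : α ∈ χ(M(A)) } for every p ∈ P_Λ, then f ∈ χ(M(A)). In other words, χ(M(A)) is polynomially convex in X(Λ). -/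
open WeakDual

/-- The ideal of `A` obtained as the closure of the image of an ideal `J` of `B` under an algebra
homomorphism `B → A` with dense range. -/
def Ideal.closureMapOfDenseRange {R A B : Type*} [CommRing A] [TopologicalSpace A]
    [IsTopologicalRing A] [CommRing B] [CommSemiring R] [Algebra R A] [Algebra R B]
    (h : B →ₐ[R] A) (hd : DenseRange h) (J : Ideal B) : Ideal A where
  toAddSubmonoid := (J.toAddSubmonoid.map (h : B →+ A)).topologicalClosure
  smul_mem' := by
    intro a x hx
    refine hd.induction_on (p := fun a => a • x ∈ closure (h '' J)) a
      (isClosed_closure.preimage (by fun_prop)) fun b => ?_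
    refine map_mem_closure (f := fun y => h b • y) (by fun_prop) hx ?_
    rintro _ ⟨c, hc, rfl⟩
    exact ⟨b * c, J.mul_mem_left b hc, by simp⟩

theorem Ideal.mem_closureMapOfDenseRange {R A B : Type*} [CommRing A] [TopologicalSpace A]
    [IsTopologicalRing A] [CommRing B] [CommSemiring R] [Algebra R A] [Algebra R B]
    {h : B →ₐ[R] A} {hd : DenseRange h} {J : Ideal B} {a : A} :
    a ∈ J.closureMapOfDenseRange h hd ↔ a ∈ closure (h '' J) :=
  Iff.rfl

/-- A proper ideal of a complex commutative Banach algebra lies in the kernel of a character. -/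
theorem WeakDual.CharacterSpace.exists_forall_mem_apply_eq_zero {A : Type*} [NormedCommRing A]
    [NormedAlgebra ℂ A] [CompleteSpace A] {I : Ideal A} (hI : I ≠ ⊤) :
    ∃ φ : characterSpace ℂ A, ∀ a ∈ I, φ a = 0 := by
  obtain ⟨M, hM, hIM⟩ := I.exists_le_maximal hI
  exact ⟨M.toCharacterSpace, fun a ha => M.toCharacterSpace_apply_eq_zero_of_mem (hIM ha)⟩

theorem WeakDual.CharacterSpace.norm_apply_le {A : Type*} [NormedCommRing A]
    [NormedAlgebra ℂ A] [CompleteSpace A] (φ : characterSpace ℂ A) (a : A) :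
    ‖φ a‖ ≤ ‖a‖ * ‖(1 : A)‖ :=
  spectrum.norm_le_norm_mul_of_mem (AlgHom.apply_mem_spectrum φ a)

theorem MvPolynomial.aeval_mem_adjoin_coordinates {R σ : Type*} [CommSemiring R]
    (P : MvPolynomial σ R) :
    (fun g : σ → R => MvPolynomial.aeval g P) ∈
      Algebra.adjoin R {q : (σ → R) → R | ∃ l : σ, q = fun g => g l} := by
  induction P using MvPolynomial.induction_on with
  | C r =>
    convert Subalgebra.algebraMap_mem _ r using 1
    ext g
    simp
  | add P Q hP hQ =>
    convert add_mem hP hQ using 1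
    ext g
    simp
  | mul_X P l hP =>
    convert mul_mem hP (Algebra.subset_adjoin ⟨l, rfl⟩) using 1
    ext g
    simp

/-- **Proposition 2.4 (polynomial convexity of `χ(M(A))`).**  Let `A` be a
commutative unital Banach algebra over `ℂ` with a set of generators `Λ`, let
`X(Λ) = (Λ → ℂ)` carry the product topology, let `χ : M(A) → X(Λ)` be the
evaluation embedding of the maximal ideal space, and let `P_Λ` be the smallest
subalgebra of functions `X(Λ) → ℂ` containing the constants and all coordinate
projections `π_λ`.  If `f ∈ X(Λ)` satisfies
`|p(f)| ≤ sup { |p(α)| : α ∈ χ(M(A)) }` for every `p ∈ P_Λ`, then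
`f ∈ χ(M(A))`. -/
theorem characterSpace_image_polynomially_convex (A : Type*) [NormedCommRing A]
    [NormedAlgebra ℂ A] [CompleteSpace A] (Λ : Set A)
    (hgen : (Algebra.adjoin ℂ Λ).topologicalClosure = ⊤)
    (χ : ↥(characterSpace ℂ A) → (↥Λ → ℂ))
    (hχ : ∀ (φ : ↥(characterSpace ℂ A)) (l : ↥Λ), χ φ l = φ (l : A))
    (f : ↥Λ → ℂ)
    (hf : ∀ p : (↥Λ → ℂ) → ℂ,
      p ∈ Algebra.adjoin ℂ {q : (↥Λ → ℂ) → ℂ | ∃ l : ↥Λ, q = fun g => g l} →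
      ‖p f‖ ≤ ⨆ φ : ↥(characterSpace ℂ A), ‖p (χ φ)‖) :
    f ∈ Set.range χ := by
  have hd : DenseRange (MvPolynomial.aeval (R := ℂ) ((↑) : Λ → A)) := by
    rw [Algebra.adjoin_eq_range] at hgen
    exact dense_iff_closure_eq.2 (congrArg SetLike.coe hgen)
  let J : Ideal (MvPolynomial Λ ℂ) := RingHom.ker (MvPolynomial.aeval (R := ℂ) f)
  have hne : J.closureMapOfDenseRange _ hd ≠ ⊤ := by
    rw [Ideal.ne_top_iff_one, Ideal.mem_closureMapOfDenseRange, Metric.mem_closure_iff]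
    intro hcl
    obtain ⟨_, ⟨P, hP, rfl⟩, hdist⟩ := hcl (1 / (‖(1 : A)‖ + 1)) (by positivity)
    have hPf : MvPolynomial.aeval f P = 0 := hP
    have hle := hf _ (MvPolynomial.aeval_mem_adjoin_coordinates (1 - P))
    have hsup : ⨆ φ : characterSpace ℂ A, ‖MvPolynomial.aeval (χ φ) (1 - P)‖ ≤
        ‖1 - MvPolynomial.aeval (R := ℂ) ((↑) : Λ → A) P‖ * ‖(1 : A)‖ := by
      refine Real.iSup_le (fun φ => ?_) (by positivity)
      have hφ : MvPolynomial.aeval (χ φ) (1 - P) =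
          φ (1 - MvPolynomial.aeval (R := ℂ) ((↑) : Λ → A) P) := by
        rw [funext (hχ φ), ← map_one (MvPolynomial.aeval (R := ℂ) ((↑) : Λ → A)), ← map_sub]
        exact (MvPolynomial.comp_aeval_apply (f := ((↑) : Λ → A))
          (CharacterSpace.toAlgHom φ) (1 - P)).symm
      exact hφ ▸ CharacterSpace.norm_apply_le φ _
    rw [map_sub, map_one, hPf, sub_zero, norm_one] at hle
    rw [dist_eq_norm, lt_div_iff₀ (by positivity)] at hdist
    nlinarith [norm_nonneg (1 - MvPolynomial.aeval (R := ℂ) ((↑) : Λ → A) P)]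
  obtain ⟨φ, hφ⟩ := CharacterSpace.exists_forall_mem_apply_eq_zero hne
  refine ⟨φ, funext fun l => ?_⟩
  have hl := hφ ((l : A) - algebraMap ℂ A (f l)) <| Ideal.mem_closureMapOfDenseRange.2 <|
    subset_closure ⟨MvPolynomial.X l - MvPolynomial.C (f l), by simp [J, RingHom.mem_ker], by simp⟩
  rw [map_sub, AlgHomClass.commutes, sub_eq_zero] at hl
  exact (hχ φ l).trans hl
end

section
/- Let S ⊂ ℝ^k be a halfspace, let Σ be an additive subgroup of ℝ^k, and let G ∈ (APW^k_Σ)^{n×n}. Then G admits a canonical left (AP_S)_{ℝ^k} factorization if and only if the Toeplitz operator T(G^T)_{S,ℝ^k} is invertible (where G^T is the transposed matrix function). Moreover, if this is the case, then the operator T(G^T)_{S,Σ} is invertible as well, and any (AP_S)_{ℝ^k} factorization of G is automatically a canonical (APW_S)_Σ factorization. -/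
/- Almost periodic functions of `k` real variables, their Bohr-Fourier
coefficients and spectra, the Wiener algebra, and halfspaces. -/

open MeasureTheory Filter BoundedContinuousFunction

noncomputable section

/-- The Banach algebra of bounded continuous functions `ℝ^k → ℂ` (sup norm). -/
abbrev APB (k : ℕ) := BoundedContinuousFunction (Fin k → ℝ) ℂ

/-- The elementary exponential `e_λ(x) = e^{i⟨λ,x⟩}` as a bounded continuous function. -/
def apExp (k : ℕ) (lam : Fin k → ℝ) : APB k :=
  BoundedContinuousFunction.ofNormedAddCommGroup
    (fun x => Complex.exp (Complex.I * ((∑ j, lam j * x j : ℝ) : ℂ)))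
    (by fun_prop) 1
    (fun x => by
      simp [Complex.norm_exp, Complex.mul_re])

/-- `AP^k`: the closed subalgebra of `L^∞`-type bounded continuous functions
generated by all exponentials `e_λ`, `λ ∈ ℝ^k`. -/
def APalg (k : ℕ) : Subalgebra ℂ (APB k) :=
  (Algebra.adjoin ℂ (Set.range (apExp k))).topologicalClosure

/-- The Bohr-Fourier coefficient
`f_λ = lim_{T→∞} (2T)^{-k} ∫_{[-T,T]^k} e^{-i⟨λ,x⟩} f(x) dx`. -/
def bohrCoeff (k : ℕ) (f : (Fin k → ℝ) → ℂ) (lam : Fin k → ℝ) : ℂ :=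
  limUnder atTop (fun T : ℝ =>
    (((2 * T) ^ k : ℝ) : ℂ)⁻¹ *
      ∫ x in Set.Icc (fun _ => -T : Fin k → ℝ) (fun _ => T),
        Complex.exp (-(Complex.I * ((∑ j, lam j * x j : ℝ) : ℂ))) * f x)

/-- The Bohr-Fourier spectrum `σ(f) = {λ : f_λ ≠ 0}`. -/
def bohrSpectrum (k : ℕ) (f : (Fin k → ℝ) → ℂ) : Set (Fin k → ℝ) :=
  {lam | bohrCoeff k f lam ≠ 0}

/-- Membership in `AP^k_Δ = {f ∈ AP^k : σ(f) ⊆ Δ}`. -/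
def APmem (k : ℕ) (Δ : Set (Fin k → ℝ)) (f : APB k) : Prop :=
  f ∈ APalg k ∧ bohrSpectrum k ⇑f ⊆ Δ

/-- Membership in the Wiener algebra `APW^k_Δ`: almost periodic with spectrum
in `Δ` and absolutely convergent Bohr-Fourier series. -/
def APWmem (k : ℕ) (Δ : Set (Fin k → ℝ)) (f : APB k) : Prop :=
  APmem k Δ f ∧ Summable (fun lam => ‖bohrCoeff k (⇑f) lam‖)

/-- The Wiener norm `‖f‖_W = ∑_λ |f_λ|`. -/
def wienerNorm (k : ℕ) (f : (Fin k → ℝ) → ℂ) : ℝ :=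
  ∑' lam, ‖bohrCoeff k f lam‖

/-- A halfspace `S ⊂ ℝ^k`: `ℝ^k = S ∪ (-S)`, `S ∩ (-S) = {0}`, and `S` is
closed under addition and under multiplication by nonnegative reals. -/
structure IsHalfspace (k : ℕ) (S : Set (Fin k → ℝ)) : Prop where
  union : S ∪ -S = Set.univ
  inter : S ∩ -S = {0}
  add_mem : ∀ x ∈ S, ∀ y ∈ S, x + y ∈ S
  smul_mem : ∀ x ∈ S, ∀ a : ℝ, 0 ≤ a → a • x ∈ S

/- Left `(AP_S)_Σ` and `(APW_S)_Σ` factorizations of rectangular almost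
periodic matrix functions. -/

/-- `G = G⁺ · diag(e_{λ_1},…,e_{λ_p}) · G⁻` is a left `(AP_S)_Σ` factorization
of `G` with factorization indices `lam`: the entries of `G⁺` lie in
`AP^k_{Σ∩S}` and `G⁺` is right invertible over `AP^k_{Σ∩S}`, the entries of
`G⁻` lie in `AP^k_{Σ∩(-S)}` and `G⁻` is left invertible over `AP^k_{Σ∩(-S)}`,
and all indices lie in `Σ`. -/
def IsAPFactorization (k : ℕ) {m n p : ℕ} (S Sg : Set (Fin k → ℝ))
    (G : Matrix (Fin m) (Fin n) (APB k)) (lam : Fin p → (Fin k → ℝ))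
    (Gp : Matrix (Fin m) (Fin p) (APB k)) (Gm : Matrix (Fin p) (Fin n) (APB k)) : Prop :=
  (∀ i j, APmem k (Sg ∩ S) (Gp i j)) ∧
  (∀ i j, APmem k (Sg ∩ (-S)) (Gm i j)) ∧
  (∀ j, lam j ∈ Sg) ∧
  (∃ Gpr : Matrix (Fin p) (Fin m) (APB k),
      (∀ i j, APmem k (Sg ∩ S) (Gpr i j)) ∧ Gp * Gpr = 1) ∧
  (∃ Gml : Matrix (Fin n) (Fin p) (APB k),
      (∀ i j, APmem k (Sg ∩ (-S)) (Gml i j)) ∧ Gml * Gm = 1) ∧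
  G = Gp * Matrix.diagonal (fun j => apExp k (lam j)) * Gm

/-- A left `(APW_S)_Σ` factorization: as `IsAPFactorization`, with the Wiener
algebra `APW` in place of `AP` throughout. -/
def IsAPWFactorization (k : ℕ) {m n p : ℕ} (S Sg : Set (Fin k → ℝ))
    (G : Matrix (Fin m) (Fin n) (APB k)) (lam : Fin p → (Fin k → ℝ))
    (Gp : Matrix (Fin m) (Fin p) (APB k)) (Gm : Matrix (Fin p) (Fin n) (APB k)) : Prop :=
  (∀ i j, APWmem k (Sg ∩ S) (Gp i j)) ∧
  (∀ i j, APWmem k (Sg ∩ (-S)) (Gm i j)) ∧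
  (∀ j, lam j ∈ Sg) ∧
  (∃ Gpr : Matrix (Fin p) (Fin m) (APB k),
      (∀ i j, APWmem k (Sg ∩ S) (Gpr i j)) ∧ Gp * Gpr = 1) ∧
  (∃ Gml : Matrix (Fin n) (Fin p) (APB k),
      (∀ i j, APWmem k (Sg ∩ (-S)) (Gml i j)) ∧ Gml * Gm = 1) ∧
  G = Gp * Matrix.diagonal (fun j => apExp k (lam j)) * Gm

/- The Besicovitch space and Toeplitz operators.  The Besicovitch space `B^k`
is the Hilbert-space completion of `AP^k` in the inner product `⟨f,g⟩=M{f·ḡ}`;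
the exponentials `e_λ` form an orthonormal basis, so `(B^k_Λ)^{n×1}` is
canonically identified (via Bohr-Fourier coefficients) with `ℓ²(Fin n × Λ)`. -/

/-- The column Besicovitch space `(B^k_Λ)^{n×1} ≅ ℓ²(Fin n × Λ)`. -/
abbrev BesCol (k n : ℕ) (Λ : Set (Fin k → ℝ)) : Type :=
  lp (fun _ : Fin n × ↥Λ => ℂ) 2

/-- `T` is the Toeplitz operator
`T(F)_{S,Λ} : (B^k_{S∩Λ})^{n×1} → (B^k_{S∩Λ})^{m×1}`, `φ ↦ Π_{S∩Λ}(Fφ)`,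
characterized by its matrix with respect to the orthonormal basis of
exponentials: `⟪e_ν δ_i , T(e_μ δ_j)⟫ = (F i j)_{ν-μ}` (Bohr-Fourier
coefficient of the `(i,j)` entry at `ν - μ`). -/
def RepresentsToeplitz (k : ℕ) (S Λ : Set (Fin k → ℝ)) (m n : ℕ)
    (F : Matrix (Fin m) (Fin n) (APB k))
    (T : BesCol k n (S ∩ Λ) →L[ℂ] BesCol k m (S ∩ Λ)) : Prop :=
  ∀ (j : Fin n) (μ : ↥(S ∩ Λ)) (i : Fin m) (ν : ↥(S ∩ Λ)),
    (inner ℂ (lp.single 2 (i, ν) (1 : ℂ)) (T (lp.single 2 (j, μ) (1 : ℂ))) : ℂ) =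
      bohrCoeff k (⇑(F i j)) ((ν : Fin k → ℝ) - (μ : Fin k → ℝ))

/-- Invertibility of a continuous linear map. -/
def CLMInvertible {E F : Type*} [NormedAddCommGroup E] [NormedAddCommGroup F]
    [NormedSpace ℂ E] [NormedSpace ℂ F] (T : E →L[ℂ] F) : Prop :=
  ∃ Tinv : F →L[ℂ] E,
    Tinv.comp T = ContinuousLinearMap.id ℂ E ∧ T.comp Tinv = ContinuousLinearMap.id ℂ F

section Exponentials

theorem apExp_apply (k : ℕ) (lam x : Fin k → ℝ) :
    apExp k lam x = Complex.exp (Complex.I * ((∑ j, lam j * x j : ℝ) : ℂ)) := rfl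

theorem apExp_zero (k : ℕ) : apExp k 0 = 1 := by
  ext x
  simp [apExp_apply]

theorem apExp_add (k : ℕ) (a b : Fin k → ℝ) : apExp k (a + b) = apExp k a * apExp k b := by
  ext x
  simp only [apExp_apply, BoundedContinuousFunction.mul_apply, ← Complex.exp_add]
  congr 1
  simp only [Pi.add_apply, add_mul, Finset.sum_add_distrib]
  push_cast
  ring

theorem star_apExp (k : ℕ) (a : Fin k → ℝ) : star (apExp k a) = apExp k (-a) := by
  ext x
  simp only [BoundedContinuousFunction.star_apply, apExp_apply, Complex.star_def,
    ← Complex.exp_conj]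
  congr 1
  simp [Complex.conj_ofReal]

theorem norm_apExp_apply (k : ℕ) (a x : Fin k → ℝ) : ‖apExp k a x‖ = 1 := by
  simp [apExp_apply, Complex.norm_exp]

theorem norm_apExp_le (k : ℕ) (a : Fin k → ℝ) : ‖apExp k a‖ ≤ 1 :=
  (BoundedContinuousFunction.norm_le zero_le_one).2 fun x => (norm_apExp_apply k a x).le

theorem APalg_toSubmodule (k : ℕ) :
    ((Algebra.adjoin ℂ (Set.range (apExp k))).toSubmodule : Submodule ℂ (APB k)) =
      Submodule.span ℂ (Set.range (apExp k)) := by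
  apply Algebra.adjoin_eq_span_of_subset
  refine subset_trans ?_ Submodule.subset_span
  intro x hx
  induction hx using Submonoid.closure_induction with
  | mem x h => exact h
  | one => exact ⟨0, apExp_zero k⟩
  | mul x y _ _ hx hy =>
    obtain ⟨a, rfl⟩ := hx
    obtain ⟨b, rfl⟩ := hy
    exact ⟨a + b, apExp_add k a b⟩

theorem apExp_mem (k : ℕ) (a : Fin k → ℝ) : apExp k a ∈ APalg k :=
  Subalgebra.le_topologicalClosure _ (Algebra.subset_adjoin ⟨a, rfl⟩)

/-- Induction principle: a property of almost periodic functions that holds for the exponentials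
and is stable under linear combinations and uniform limits holds on all of `AP^k`. -/
theorem APalg_induction (k : ℕ) {p : APB k → Prop} (hexp : ∀ a, p (apExp k a))
    (hzero : p 0) (hadd : ∀ f g, p f → p g → p (f + g)) (hsmul : ∀ (c : ℂ) f, p f → p (c • f))
    (hclosed : ∀ f, (∀ ε > 0, ∃ g, p g ∧ ‖f - g‖ ≤ ε) → p f)
    {f : APB k} (hf : f ∈ APalg k) : p f := by
  apply hclosed
  intro ε hε
  have hf' : f ∈ closure ((Algebra.adjoin ℂ (Set.range (apExp k)) : Subalgebra ℂ (APB k)) :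
      Set (APB k)) := hf
  obtain ⟨g, hg, hfg⟩ := Metric.mem_closure_iff.1 hf' ε hε
  have hspan : ∀ z ∈ Submodule.span ℂ (Set.range (apExp k)), p z := by
    intro z hz
    induction hz using Submodule.span_induction with
    | mem x h => obtain ⟨a, rfl⟩ := h; exact hexp a
    | zero => exact hzero
    | add x y _ _ h1 h2 => exact hadd x y h1 h2
    | smul c x _ h => exact hsmul c x h
  refine ⟨g, hspan g ?_, by rw [← dist_eq_norm]; exact hfg.le⟩
  rw [← APalg_toSubmodule]
  exact hg

theorem mem_APalg_of_approx (k : ℕ) {f : APB k}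
    (h : ∀ ε > 0, ∃ g ∈ APalg k, ‖f - g‖ ≤ ε) : f ∈ APalg k := by
  have hcl : IsClosed (APalg k : Set (APB k)) := Subalgebra.isClosed_topologicalClosure _
  rw [← SetLike.mem_coe, ← hcl.closure_eq, Metric.mem_closure_iff]
  intro ε hε
  obtain ⟨g, hg, hfg⟩ := h (ε / 2) (by positivity)
  exact ⟨g, hg, by rw [dist_eq_norm]; linarith⟩

end Exponentials

section Mean

/-- The average of `f` over the cube `[-T, T]^k`. -/
def boxAvg (k : ℕ) (T : ℝ) (f : (Fin k → ℝ) → ℂ) : ℂ :=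
  (((2 * T) ^ k : ℝ) : ℂ)⁻¹ * ∫ x in Set.Icc (fun _ => -T : Fin k → ℝ) (fun _ => T), f x

theorem bohrCoeff_eq (k : ℕ) (f : APB k) (lam : Fin k → ℝ) :
    bohrCoeff k f lam = limUnder atTop (fun T => boxAvg k T ⇑(apExp k (-lam) * f)) := by
  simp only [bohrCoeff, boxAvg, BoundedContinuousFunction.mul_apply, apExp_apply]
  congr! 5 with T
  simp

theorem integrableOn_box (k : ℕ) (T : ℝ) (f : APB k) :
    IntegrableOn f (Set.Icc (fun _ => -T : Fin k → ℝ) (fun _ => T)) :=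
  f.continuous.continuousOn.integrableOn_compact isCompact_Icc

theorem boxAvg_add (k : ℕ) (T : ℝ) (f g : APB k) :
    boxAvg k T ⇑(f + g) = boxAvg k T f + boxAvg k T g := by
  simp only [boxAvg, BoundedContinuousFunction.coe_add, Pi.add_apply]
  rw [integral_add (integrableOn_box k T f) (integrableOn_box k T g), mul_add]

theorem boxAvg_smul (k : ℕ) (T : ℝ) (c : ℂ) (f : APB k) :
    boxAvg k T ⇑(c • f) = c * boxAvg k T f := by
  simp only [boxAvg, BoundedContinuousFunction.coe_smul, smul_eq_mul, integral_const_mul]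
  ring

theorem boxAvg_sub (k : ℕ) (T : ℝ) (f g : APB k) :
    boxAvg k T ⇑(f - g) = boxAvg k T f - boxAvg k T g := by
  rw [sub_eq_add_neg, boxAvg_add, ← neg_one_smul ℂ g, boxAvg_smul]
  ring

theorem boxAvg_star (k : ℕ) (T : ℝ) (f : APB k) :
    boxAvg k T ⇑(star f) = star (boxAvg k T f) := by
  simp only [boxAvg, BoundedContinuousFunction.coe_star, Pi.star_apply, Complex.star_def,
    map_mul, map_inv₀, Complex.conj_ofReal, ← integral_conj]

theorem volume_box (k : ℕ) {T : ℝ} (hT : 0 < T) :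
    volume.real (Set.Icc (fun _ => -T : Fin k → ℝ) (fun _ => T)) = (2 * T) ^ k := by
  rw [Measure.real, Real.volume_Icc_pi_toReal (fun _ => by linarith)]
  simp only [Finset.prod_const, Finset.card_univ, Fintype.card_fin]
  ring

theorem norm_boxAvg_le (k : ℕ) {T : ℝ} (hT : 0 < T) (f : APB k) :
    ‖boxAvg k T f‖ ≤ ‖f‖ := by
  have hfin : volume (Set.Icc (fun _ => -T : Fin k → ℝ) (fun _ => T)) < ⊤ :=
    isCompact_Icc.measure_lt_top
  have h := norm_setIntegral_le_of_norm_le_const (μ := volume) (f := f) hfin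
    (fun x _ => f.norm_coe_le_norm x)
  rw [volume_box k hT] at h
  have hpos : (0 : ℝ) < (2 * T) ^ k := by positivity
  rw [boxAvg, norm_mul, norm_inv, Complex.norm_real, Real.norm_of_nonneg hpos.le]
  rw [inv_mul_le_iff₀ hpos]
  linarith

theorem tendsto_intervalAvg (a : ℝ) :
    Tendsto (fun T : ℝ => ((2 * T : ℝ) : ℂ)⁻¹ *
      ∫ x in Set.Icc (-T) T, Complex.exp (Complex.I * ((a * x : ℝ) : ℂ))) atTop
      (nhds (if a = 0 then 1 else 0)) := by
  split_ifs with ha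
  · subst ha
    refine tendsto_const_nhds.congr' ?_
    filter_upwards [eventually_gt_atTop 0] with T hT
    have : ((2 * T : ℝ) : ℂ) ≠ 0 := by exact_mod_cast (by positivity : (2 * T : ℝ) ≠ 0)
    simp only [zero_mul, Complex.ofReal_zero, mul_zero, Complex.exp_zero]
    rw [setIntegral_const]
    rw [Measure.real, Real.volume_Icc, ENNReal.toReal_ofReal (by linarith)]
    rw [eq_inv_mul_iff_mul_eq₀ this]
    simp only [mul_one, Complex.real_smul]
    push_cast
    ring
  · rw [tendsto_zero_iff_norm_tendsto_zero]
    have hlim : Tendsto (fun T : ℝ => (2 * T)⁻¹ * (2 / |a|)) atTop (nhds 0) := by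
      have : Tendsto (fun T : ℝ => (2 * T)⁻¹) atTop (nhds 0) :=
        tendsto_inv_atTop_zero.comp (tendsto_id.const_mul_atTop two_pos)
      simpa using this.mul_const (2 / |a|)
    refine squeeze_zero' (Eventually.of_forall fun _ => norm_nonneg _) ?_ hlim
    filter_upwards [eventually_gt_atTop 0] with T hT
    rw [norm_mul, norm_inv, Complex.norm_real, Real.norm_of_nonneg (by positivity)]
    gcongr
    rw [integral_Icc_eq_integral_Ioc, ← intervalIntegral.integral_of_le (by linarith)]
    have hc : Complex.I * (a : ℂ) ≠ 0 := by simp [ha]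
    have : ∀ x : ℝ, Complex.exp (Complex.I * ((a * x : ℝ) : ℂ)) =
        Complex.exp (Complex.I * (a : ℂ) * x) := by
      intro x; push_cast; ring_nf
    simp only [this]
    rw [integral_exp_mul_complex hc, norm_div]
    have hna : ‖Complex.I * (a : ℂ)‖ = |a| := by simp
    rw [hna]
    gcongr
    refine (norm_sub_le _ _).trans ?_
    have : ∀ x : ℝ, ‖Complex.exp (Complex.I * (a : ℂ) * x)‖ = 1 := by
      intro x; simp [Complex.norm_exp]
    rw [this, this]
    norm_num

theorem boxAvg_apExp (k : ℕ) (T : ℝ) (a : Fin k → ℝ) :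
    boxAvg k T (apExp k a) = ∏ j, (((2 * T : ℝ) : ℂ)⁻¹ *
      ∫ x in Set.Icc (-T) T, Complex.exp (Complex.I * ((a j * x : ℝ) : ℂ))) := by
  rw [Finset.prod_mul_distrib, boxAvg]
  congr 1
  · simp [mul_pow, mul_comm]
  · rw [← Set.pi_univ_Icc, volume_pi, Measure.restrict_pi_pi,
      ← integral_fintype_prod_eq_prod]
    congr with x
    rw [apExp_apply, ← Complex.exp_sum]
    congr 1
    push_cast
    rw [Finset.mul_sum]

theorem tendsto_boxAvg_apExp (k : ℕ) (a : Fin k → ℝ) :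
    Tendsto (fun T => boxAvg k T (apExp k a)) atTop (nhds (if a = 0 then 1 else 0)) := by
  simp only [boxAvg_apExp]
  have h := tendsto_finsetProd (Finset.univ : Finset (Fin k))
    (fun j _ => tendsto_intervalAvg (a j))
  convert h using 2
  by_cases ha : a = 0
  · simp [ha]
  · rw [if_neg ha]
    obtain ⟨j, hj⟩ := Function.ne_iff.1 ha
    exact (Finset.prod_eq_zero (Finset.mem_univ j) (if_neg hj)).symm

theorem exists_tendsto_boxAvg (k : ℕ) {f : APB k} (hf : f ∈ APalg k) :
    ∃ l, Tendsto (fun T => boxAvg k T f) atTop (nhds l) := by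
  refine APalg_induction k (p := fun f => ∃ l, Tendsto (fun T => boxAvg k T f) atTop (nhds l))
    (fun a => ⟨_, tendsto_boxAvg_apExp k a⟩) ⟨0, by simp [boxAvg]⟩ ?_ ?_ ?_ hf
  · intro f g hf hg
    obtain ⟨l, hl⟩ := hf
    obtain ⟨m, hm⟩ := hg
    exact ⟨l + m, by simpa only [boxAvg_add] using hl.add hm⟩
  · intro c f hf
    obtain ⟨l, hl⟩ := hf
    exact ⟨c * l, by simpa only [boxAvg_smul] using hl.const_mul c⟩
  · intro f hf
    rw [← cauchy_map_iff_exists_tendsto, Metric.cauchy_iff]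
    refine ⟨inferInstance, fun ε hε => ?_⟩
    obtain ⟨g, ⟨l, hl⟩, hfg⟩ := hf (ε / 4) (by positivity)
    have hev := (Metric.tendsto_nhds.1 hl (ε / 5) (by positivity)).and (eventually_gt_atTop 0)
    have hev' : ∀ᶠ T in atTop, dist (boxAvg k T f) l < ε / 2 := by
      filter_upwards [hev] with T hT
      have h1 := norm_boxAvg_le k hT.2 (f - g)
      rw [boxAvg_sub, ← dist_eq_norm] at h1
      have := dist_triangle (boxAvg k T f) (boxAvg k T g) l
      linarith [hT.1]
    refine ⟨Metric.ball l (ε / 2), hev', fun x hx y hy => ?_⟩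
    have := dist_triangle_right x y l
    rw [Metric.mem_ball] at hx hy
    linarith

theorem tendsto_bohrCoeff (k : ℕ) {f : APB k} (hf : f ∈ APalg k) (lam : Fin k → ℝ) :
    Tendsto (fun T => boxAvg k T ⇑(apExp k (-lam) * f)) atTop (nhds (bohrCoeff k f lam)) := by
  rw [bohrCoeff_eq]
  exact tendsto_nhds_limUnder
    (exists_tendsto_boxAvg k ((APalg k).mul_mem (apExp_mem k _) hf))

theorem tendsto_mean (k : ℕ) {f : APB k} (hf : f ∈ APalg k) :
    Tendsto (fun T => boxAvg k T f) atTop (nhds (bohrCoeff k f 0)) := by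
  simpa [apExp_zero] using tendsto_bohrCoeff k hf 0

theorem bohrCoeff_apExp_mul (k : ℕ) {f : APB k} (hf : f ∈ APalg k) (a lam : Fin k → ℝ) :
    bohrCoeff k ⇑(apExp k a * f) lam = bohrCoeff k f (lam - a) := by
  refine tendsto_nhds_unique
    (tendsto_bohrCoeff k ((APalg k).mul_mem (apExp_mem k a) hf) lam) ?_
  convert tendsto_bohrCoeff k hf (lam - a) using 4
  rw [← mul_assoc, ← apExp_add]
  congr 2
  abel

theorem bohrCoeff_apExp (k : ℕ) (a lam : Fin k → ℝ) :
    bohrCoeff k (apExp k a) lam = if lam = a then 1 else 0 := by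
  refine tendsto_nhds_unique (tendsto_bohrCoeff k (apExp_mem k a) lam) ?_
  rw [← apExp_add]
  convert tendsto_boxAvg_apExp k (-lam + a) using 3
  rw [neg_add_eq_zero]

theorem bohrCoeff_add (k : ℕ) {f g : APB k} (hf : f ∈ APalg k) (hg : g ∈ APalg k)
    (lam : Fin k → ℝ) :
    bohrCoeff k ⇑(f + g) lam = bohrCoeff k f lam + bohrCoeff k g lam := by
  refine tendsto_nhds_unique (tendsto_bohrCoeff k ((APalg k).add_mem hf hg) lam) ?_
  simpa only [mul_add, boxAvg_add] using
    (tendsto_bohrCoeff k hf lam).add (tendsto_bohrCoeff k hg lam)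

theorem bohrCoeff_smul (k : ℕ) (c : ℂ) {f : APB k} (hf : f ∈ APalg k) (lam : Fin k → ℝ) :
    bohrCoeff k ⇑(c • f) lam = c * bohrCoeff k f lam := by
  refine tendsto_nhds_unique (tendsto_bohrCoeff k ((APalg k).smul_mem hf c) lam) ?_
  simpa only [mul_smul_comm, boxAvg_smul] using (tendsto_bohrCoeff k hf lam).const_mul c

theorem bohrCoeff_sub (k : ℕ) {f g : APB k} (hf : f ∈ APalg k) (hg : g ∈ APalg k)
    (lam : Fin k → ℝ) :
    bohrCoeff k ⇑(f - g) lam = bohrCoeff k f lam - bohrCoeff k g lam := by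
  refine tendsto_nhds_unique (tendsto_bohrCoeff k ((APalg k).sub_mem hf hg) lam) ?_
  simpa only [mul_sub, boxAvg_sub] using
    (tendsto_bohrCoeff k hf lam).sub (tendsto_bohrCoeff k hg lam)

theorem bohrCoeff_zero (k : ℕ) (lam : Fin k → ℝ) : bohrCoeff k ⇑(0 : APB k) lam = 0 := by
  have := bohrCoeff_smul k 0 (APalg k).zero_mem lam
  simpa using this

theorem norm_bohrCoeff_le (k : ℕ) {f : APB k} (hf : f ∈ APalg k) (lam : Fin k → ℝ) :
    ‖bohrCoeff k f lam‖ ≤ ‖f‖ := by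
  refine le_of_tendsto (tendsto_bohrCoeff k hf lam).norm ?_
  filter_upwards [eventually_gt_atTop 0] with T hT
  calc ‖boxAvg k T ⇑(apExp k (-lam) * f)‖ ≤ ‖apExp k (-lam) * f‖ := norm_boxAvg_le k hT _
    _ ≤ ‖apExp k (-lam)‖ * ‖f‖ := norm_mul_le _ _
    _ ≤ 1 * ‖f‖ := by gcongr; exact norm_apExp_le k _
    _ = ‖f‖ := one_mul _

theorem star_mem_APalg (k : ℕ) {f : APB k} (hf : f ∈ APalg k) : star f ∈ APalg k := by
  refine APalg_induction k (p := fun f => star f ∈ APalg k) ?_ ?_ ?_ ?_ ?_ hf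
  · intro a
    rw [star_apExp]
    exact apExp_mem k _
  · rw [star_zero]
    exact (APalg k).zero_mem
  · intro f g hf hg
    rw [star_add]
    exact (APalg k).add_mem hf hg
  · intro c f hf
    rw [star_smul]
    exact (APalg k).smul_mem hf _
  · intro f hf
    refine mem_APalg_of_approx k fun ε hε => ?_
    obtain ⟨g, hg, hfg⟩ := hf ε hε
    exact ⟨star g, hg, by rwa [← star_sub, norm_star]⟩

theorem bohrCoeff_star (k : ℕ) {f : APB k} (hf : f ∈ APalg k) (lam : Fin k → ℝ) :
    bohrCoeff k ⇑(star f) lam = star (bohrCoeff k f (-lam)) := by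
  refine tendsto_nhds_unique (tendsto_bohrCoeff k (star_mem_APalg k hf) lam) ?_
  have h := (continuous_star.tendsto _).comp (tendsto_bohrCoeff k hf (-lam))
  refine h.congr fun T => ?_
  rw [Function.comp_apply, ← boxAvg_star, star_mul, star_apExp, mul_comm, neg_neg]

end Mean

section Uniqueness

theorem bohrCoeff_sum (k : ℕ) {ι : Type*} (s : Finset ι) {u : ι → APB k}
    (hu : ∀ i ∈ s, u i ∈ APalg k) (lam : Fin k → ℝ) :
    bohrCoeff k ⇑(∑ i ∈ s, u i) lam = ∑ i ∈ s, bohrCoeff k (u i) lam := by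
  classical
  induction s using Finset.induction_on with
  | empty => simpa using bohrCoeff_zero k lam
  | insert a s ha ih =>
    rw [Finset.sum_insert ha, Finset.sum_insert ha, bohrCoeff_add k (hu a (by simp))
      ((APalg k).sum_mem fun i hi => hu i (by simp [hi])), ih fun i hi => hu i (by simp [hi])]

theorem hasSum_bohrCoeff (k : ℕ) {ι : Type*} {u : ι → APB k} {f : APB k}
    (hu : ∀ i, u i ∈ APalg k) (hf : HasSum u f) (lam : Fin k → ℝ) :
    f ∈ APalg k ∧ HasSum (fun i => bohrCoeff k (u i) lam) (bohrCoeff k f lam) := by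
  have hcl : IsClosed (APalg k : Set (APB k)) := Subalgebra.isClosed_topologicalClosure _
  have hmem : f ∈ APalg k :=
    hcl.mem_of_tendsto hf (Eventually.of_forall fun s => (APalg k).sum_mem fun i _ => hu i)
  refine ⟨hmem, ?_⟩
  have h0 : Tendsto (fun s : Finset ι => ‖∑ i ∈ s, u i - f‖) atTop (nhds 0) :=
    tendsto_iff_norm_sub_tendsto_zero.1 hf
  refine tendsto_iff_norm_sub_tendsto_zero.2 (squeeze_zero (fun _ => norm_nonneg _) ?_ h0)
  intro s
  have hs : ∑ i ∈ s, u i ∈ APalg k := (APalg k).sum_mem fun i _ => hu i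
  rw [← bohrCoeff_sum k s (fun i _ => hu i), ← bohrCoeff_sub k hs hmem]
  exact norm_bohrCoeff_le k ((APalg k).sub_mem hs hmem) lam

/-- The translate `x ↦ f (x + t)`. -/
def apShift (k : ℕ) (t : Fin k → ℝ) (f : APB k) : APB k :=
  f.compContinuous ⟨fun x => x + t, by fun_prop⟩

theorem apShift_apply (k : ℕ) (t : Fin k → ℝ) (f : APB k) (x : Fin k → ℝ) :
    apShift k t f x = f (x + t) := rfl

theorem norm_apShift_sub_le (k : ℕ) (t : Fin k → ℝ) (f g : APB k) :
    ‖apShift k t f - apShift k t g‖ ≤ ‖f - g‖ :=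
  (BoundedContinuousFunction.norm_le (norm_nonneg _)).2 fun x =>
    (f - g).norm_coe_le_norm (x + t)

theorem apShift_apExp (k : ℕ) (t a : Fin k → ℝ) :
    apShift k t (apExp k a) = apExp k a t • apExp k a := by
  ext x
  simp only [apShift_apply, apExp_apply, BoundedContinuousFunction.coe_smul, smul_eq_mul,
    ← Complex.exp_add]
  congr 1
  simp only [Pi.add_apply, mul_add, Finset.sum_add_distrib]
  push_cast
  ring

theorem apShift_mem (k : ℕ) (t : Fin k → ℝ) {f : APB k} (hf : f ∈ APalg k) :
    apShift k t f ∈ APalg k := by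
  refine APalg_induction k (p := fun f => apShift k t f ∈ APalg k) ?_ ?_ ?_ ?_ ?_ hf
  · intro a
    rw [apShift_apExp]
    exact (APalg k).smul_mem (apExp_mem k a) _
  · exact (APalg k).zero_mem
  · exact fun f g hf hg => (APalg k).add_mem hf hg
  · exact fun c f hf => (APalg k).smul_mem hf c
  · intro f hf
    refine mem_APalg_of_approx k fun ε hε => ?_
    obtain ⟨g, hg, hfg⟩ := hf ε hε
    exact ⟨apShift k t g, hg, (norm_apShift_sub_le k t f g).trans hfg⟩

theorem mean_apShift (k : ℕ) (t : Fin k → ℝ) {f : APB k} (hf : f ∈ APalg k) :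
    bohrCoeff k ⇑(apShift k t f) 0 = bohrCoeff k f 0 := by
  suffices h : f ∈ APalg k ∧ bohrCoeff k ⇑(apShift k t f) 0 = bohrCoeff k f 0 from h.2
  refine APalg_induction k
    (p := fun f => f ∈ APalg k ∧ bohrCoeff k ⇑(apShift k t f) 0 = bohrCoeff k f 0)
    ?_ ?_ ?_ ?_ ?_ hf
  · intro a
    refine ⟨apExp_mem k a, ?_⟩
    rw [apShift_apExp, bohrCoeff_smul k _ (apExp_mem k a), bohrCoeff_apExp]
    by_cases ha : (0 : Fin k → ℝ) = a
    · simp [← ha, apExp_zero]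
    · simp [ha]
  · exact ⟨(APalg k).zero_mem, rfl⟩
  · intro f g hf hg
    refine ⟨(APalg k).add_mem hf.1 hg.1, ?_⟩
    rw [bohrCoeff_add k hf.1 hg.1, ← hf.2, ← hg.2]
    exact bohrCoeff_add k (apShift_mem k t hf.1) (apShift_mem k t hg.1) 0
  · intro c f hf
    refine ⟨(APalg k).smul_mem hf.1 c, ?_⟩
    rw [bohrCoeff_smul k c hf.1, ← hf.2]
    exact bohrCoeff_smul k c (apShift_mem k t hf.1) 0
  · intro f hf
    have hmem : f ∈ APalg k := mem_APalg_of_approx k fun ε hε =>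
      (hf ε hε).imp fun g hg => ⟨hg.1.1, hg.2⟩
    refine ⟨hmem, eq_of_forall_dist_le fun ε hε => ?_⟩
    obtain ⟨g, ⟨hg, hge⟩, hfg⟩ := hf (ε / 2) (by positivity)
    have h1 := norm_bohrCoeff_le k ((APalg k).sub_mem hmem hg) 0
    have h2 := norm_bohrCoeff_le k
      ((APalg k).sub_mem (apShift_mem k t hmem) (apShift_mem k t hg)) 0
    rw [bohrCoeff_sub k hmem hg, ← dist_eq_norm] at h1
    rw [bohrCoeff_sub k (apShift_mem k t hmem) (apShift_mem k t hg), ← dist_eq_norm, hge] at h2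
    have h3 := norm_apShift_sub_le k t f g
    have := dist_triangle_right (bohrCoeff k ⇑(apShift k t f) 0) (bohrCoeff k f 0)
      (bohrCoeff k g 0)
    linarith

/-- The translates of an almost periodic function form a totally bounded set. -/
theorem totallyBounded_apShift (k : ℕ) {f : APB k} (hf : f ∈ APalg k) :
    TotallyBounded (Set.range fun t => apShift k t f) := by
  refine APalg_induction k (p := fun f => TotallyBounded (Set.range fun t => apShift k t f))
    ?_ ?_ ?_ ?_ ?_ hf
  · intro a
    have hK : IsCompact ((fun c : ℂ => c • apExp k a) '' Metric.closedBall 0 1) :=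
      (isCompact_closedBall 0 1).image (by fun_prop)
    refine hK.totallyBounded.subset ?_
    rintro _ ⟨t, rfl⟩
    exact ⟨apExp k a t, by simp [norm_apExp_apply], (apShift_apExp k t a).symm⟩
  · have : (Set.range fun t => apShift k t (0 : APB k)) ⊆ {0} := by
      rintro _ ⟨t, rfl⟩
      rfl
    exact (Set.finite_singleton _).totallyBounded.subset this
  · intro f g hf hg
    have hK := (hf.closure.isCompact_of_isClosed isClosed_closure).add
      (hg.closure.isCompact_of_isClosed isClosed_closure)
    refine hK.totallyBounded.subset ?_
    rintro _ ⟨t, rfl⟩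
    exact Set.add_mem_add (subset_closure (Set.mem_range_self t))
      (subset_closure (Set.mem_range_self t))
  · intro c f hf
    refine (hf.image (uniformContinuous_const_smul c)).subset ?_
    rintro _ ⟨t, rfl⟩
    exact ⟨apShift k t f, ⟨t, rfl⟩, rfl⟩
  · intro f hf
    rw [Metric.totallyBounded_iff]
    intro ε hε
    obtain ⟨g, hg, hfg⟩ := hf (ε / 2) (by positivity)
    obtain ⟨s, hs, hcov⟩ := Metric.totallyBounded_iff.1 hg (ε / 2) (by positivity)
    refine ⟨s, hs, ?_⟩
    rintro _ ⟨t, rfl⟩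
    have hmem := hcov ⟨t, rfl⟩
    simp only [Set.mem_iUnion, Metric.mem_ball, exists_prop] at hmem ⊢
    obtain ⟨y, hy, hd⟩ := hmem
    refine ⟨y, hy, ?_⟩
    have h1 := norm_apShift_sub_le k t f g
    rw [← dist_eq_norm] at h1
    have := dist_triangle (apShift k t f) (apShift k t g) y
    linarith

theorem le_re_boxAvg (k : ℕ) {T : ℝ} (hT : 0 < T) (f : APB k) {c : ℝ}
    (hc : ∀ x, c ≤ (f x).re) : c ≤ (boxAvg k T f).re := by
  have hpos : (0 : ℝ) < (2 * T) ^ k := by positivity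
  have hfint := integrableOn_box k T f
  rw [boxAvg, ← Complex.ofReal_inv, Complex.re_ofReal_mul, le_inv_mul_iff₀ hpos]
  have hre := integral_re (𝕜 := ℂ) hfint
  simp only [RCLike.re_to_complex] at hre
  rw [← hre]
  have hmono := setIntegral_mono_on (μ := volume)
    (s := Set.Icc (fun _ => -T : Fin k → ℝ) (fun _ => T)) (f := fun _ => c)
    (g := fun x => (f x).re)
    (integrableOn_const (isCompact_Icc.measure_lt_top.ne)) hfint.re measurableSet_Icc
    (fun x _ => hc x)
  rwa [setIntegral_const, volume_box k hT, smul_eq_mul] at hmono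

theorem le_re_mean (k : ℕ) {f : APB k} (hf : f ∈ APalg k) {c : ℝ}
    (hc : ∀ x, c ≤ (f x).re) : c ≤ (bohrCoeff k f 0).re := by
  refine ge_of_tendsto ((Complex.continuous_re.tendsto _).comp (tendsto_mean k hf)) ?_
  filter_upwards [eventually_gt_atTop 0] with T hT
  exact le_re_boxAvg k hT f hc

theorem mean_mul_eq_zero (k : ℕ) {f : APB k} (hf : f ∈ APalg k)
    (h0 : ∀ lam, bohrCoeff k f lam = 0) {g : APB k} (hg : g ∈ APalg k) :
    bohrCoeff k ⇑(g * f) 0 = 0 := by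
  suffices h : g ∈ APalg k ∧ bohrCoeff k ⇑(g * f) 0 = 0 from h.2
  refine APalg_induction k (p := fun g => g ∈ APalg k ∧ bohrCoeff k ⇑(g * f) 0 = 0)
    ?_ ?_ ?_ ?_ ?_ hg
  · exact fun a => ⟨apExp_mem k a, by rw [bohrCoeff_apExp_mul k hf, h0]⟩
  · exact ⟨(APalg k).zero_mem, by rw [zero_mul, bohrCoeff_zero]⟩
  · rintro g g' ⟨hg, hg0⟩ ⟨hg', hg0'⟩
    refine ⟨(APalg k).add_mem hg hg', ?_⟩
    rw [add_mul, bohrCoeff_add k ((APalg k).mul_mem hg hf) ((APalg k).mul_mem hg' hf), hg0, hg0',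
      add_zero]
  · rintro c g ⟨hg, hg0⟩
    refine ⟨(APalg k).smul_mem hg c, ?_⟩
    rw [smul_mul_assoc, bohrCoeff_smul k c ((APalg k).mul_mem hg hf), hg0, mul_zero]
  · intro g hg
    have hmem : g ∈ APalg k := mem_APalg_of_approx k fun ε hε =>
      (hg ε hε).imp fun g' hg' => ⟨hg'.1.1, hg'.2⟩
    refine ⟨hmem, eq_of_forall_dist_le fun ε hε => ?_⟩
    obtain ⟨g', ⟨hg', hg0⟩, hgg⟩ := hg (ε / (‖f‖ + 1)) (by positivity)
    have h1 := norm_bohrCoeff_le k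
      ((APalg k).sub_mem ((APalg k).mul_mem hmem hf) ((APalg k).mul_mem hg' hf)) 0
    rw [bohrCoeff_sub k ((APalg k).mul_mem hmem hf) ((APalg k).mul_mem hg' hf), hg0,
      ← sub_mul] at h1
    rw [dist_eq_norm]
    calc _ ≤ ‖(g - g') * f‖ := h1
      _ ≤ ‖g - g'‖ * ‖f‖ := norm_mul_le _ _
      _ ≤ ε / (‖f‖ + 1) * (‖f‖ + 1) := by gcongr; linarith
      _ = ε := by field_simp

/-- An almost periodic function all of whose Bohr-Fourier coefficients vanish is zero. -/
theorem eq_zero_of_bohrCoeff (k : ℕ) {f : APB k} (hf : f ∈ APalg k)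
    (h0 : ∀ lam, bohrCoeff k f lam = 0) : f = 0 := by
  by_contra hne
  obtain ⟨x₀, hx₀⟩ : ∃ x, f x ≠ 0 := by
    by_contra! hall
    exact hne (BoundedContinuousFunction.ext hall)
  set h : APB k := star f * f with hh
  have hmem : h ∈ APalg k := (APalg k).mul_mem (star_mem_APalg k hf) hf
  have hmean : bohrCoeff k h 0 = 0 := mean_mul_eq_zero k hf h0 (star_mem_APalg k hf)
  have hval : ∀ x, (h x).re = ‖f x‖ ^ 2 := by
    intro x
    rw [hh, BoundedContinuousFunction.mul_apply, BoundedContinuousFunction.star_apply,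
      Complex.star_def, Complex.conj_mul']
    norm_cast
  have hpos : 0 < ‖f x₀‖ ^ 2 := by positivity
  obtain ⟨s, hsub, hfin, hcov⟩ := Metric.finite_approx_of_totallyBounded
    (totallyBounded_apShift k hmem) (‖f x₀‖ ^ 2 / 2) (by positivity)
  choose! c hc using (fun y hy => hsub hy : ∀ y ∈ s, ∃ t, apShift k t h = y)
  set F : APB k := ∑ y ∈ hfin.toFinset, apShift k (x₀ - c y) h with hF
  have hFmem : F ∈ APalg k := (APalg k).sum_mem fun y _ => apShift_mem k _ hmem
  have hFmean : bohrCoeff k F 0 = 0 := by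
    rw [hF, bohrCoeff_sum k _ fun y _ => apShift_mem k _ hmem]
    exact Finset.sum_eq_zero fun y _ => by rw [mean_apShift k _ hmem, hmean]
  have hlow : ∀ t, ‖f x₀‖ ^ 2 / 2 ≤ (F t).re := by
    intro t
    have hmem' := hcov ⟨t, rfl⟩
    simp only [Set.mem_iUnion, Metric.mem_ball, exists_prop] at hmem'
    obtain ⟨y, hy, hd⟩ := hmem'
    have hFt : (F t).re = ∑ y ∈ hfin.toFinset, ‖f (t + (x₀ - c y))‖ ^ 2 := by
      rw [hF, BoundedContinuousFunction.sum_apply, Complex.re_sum]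
      simp only [apShift_apply, hval]
    have hone : ‖f x₀‖ ^ 2 / 2 ≤ ‖f (t + (x₀ - c y))‖ ^ 2 := by
      have h1 := (apShift k t h - y).norm_coe_le_norm (x₀ - c y)
      rw [← dist_eq_norm] at h1
      nth_rw 1 [← hc y hy] at h1
      simp only [BoundedContinuousFunction.coe_sub, Pi.sub_apply, apShift_apply,
        sub_add_cancel] at h1
      have h2 := (Complex.abs_re_le_norm _).trans h1
      rw [Complex.sub_re, hval, hval, add_comm (x₀ - c y) t] at h2
      have h3 := neg_abs_le (‖f (t + (x₀ - c y))‖ ^ 2 - ‖f x₀‖ ^ 2)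
      linarith
    rw [hFt]
    exact hone.trans (Finset.single_le_sum (f := fun y => ‖f (t + (x₀ - c y))‖ ^ 2)
      (fun _ _ => by positivity) (hfin.mem_toFinset.2 hy))
  have := le_re_mean k hFmem hlow
  rw [hFmean, Complex.zero_re] at this
  linarith

theorem eq_of_bohrCoeff (k : ℕ) {f g : APB k} (hf : f ∈ APalg k) (hg : g ∈ APalg k)
    (h : ∀ lam, bohrCoeff k f lam = bohrCoeff k g lam) : f = g :=
  sub_eq_zero.1 (eq_zero_of_bohrCoeff k ((APalg k).sub_mem hf hg) fun lam => by
    rw [bohrCoeff_sub k hf hg, h, sub_self])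

end Uniqueness

section Series

/-- The function with the given absolutely summable Bohr-Fourier coefficients. -/
def wienerSeries (k : ℕ) (a : (Fin k → ℝ) → ℂ) : APB k := ∑' g, a g • apExp k g

theorem hasSum_wienerSeries (k : ℕ) {a : (Fin k → ℝ) → ℂ} (ha : Summable fun g => ‖a g‖) :
    HasSum (fun g => a g • apExp k g) (wienerSeries k a) := by
  refine Summable.hasSum (Summable.of_norm_bounded ha fun g => ?_)
  rw [norm_smul]
  exact mul_le_of_le_one_right (norm_nonneg _) (norm_apExp_le k g)

theorem wienerSeries_mem (k : ℕ) {a : (Fin k → ℝ) → ℂ} (ha : Summable fun g => ‖a g‖) :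
    wienerSeries k a ∈ APalg k :=
  (hasSum_bohrCoeff k (fun g => (APalg k).smul_mem (apExp_mem k g) (a g))
    (hasSum_wienerSeries k ha) 0).1

theorem bohrCoeff_wienerSeries (k : ℕ) {a : (Fin k → ℝ) → ℂ} (ha : Summable fun g => ‖a g‖)
    (lam : Fin k → ℝ) : bohrCoeff k (wienerSeries k a) lam = a lam := by
  have h := (hasSum_bohrCoeff k (fun g => (APalg k).smul_mem (apExp_mem k g) (a g))
    (hasSum_wienerSeries k ha) lam).2
  refine h.unique ?_
  simp only [bohrCoeff_smul k _ (apExp_mem k _), bohrCoeff_apExp, mul_ite, mul_one, mul_zero]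
  convert hasSum_ite_eq lam (a lam) using 2 with g
  by_cases hg : lam = g
  · simp [hg]
  · simp [hg, Ne.symm hg]

end Series

section SquareSummable

/-- The Hilbert space `ℓ²(I)`. -/
abbrev SqSum (I : Type*) : Type _ := lp (fun _ : I => ℂ) 2

variable {I J : Type*} [DecidableEq I] [DecidableEq J]

/-- The standard basis vectors of `ℓ²(I)`. -/
def stdVec (i : I) : SqSum I := lp.single 2 i (1 : ℂ)

theorem stdVec_apply (i j : I) : stdVec i j = if j = i then (1 : ℂ) else 0 := by
  simp only [stdVec, lp.single_apply, Pi.single_apply]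

theorem inner_stdVec (i : I) (v : SqSum I) : inner ℂ (stdVec i) v = v i := by
  simp [stdVec, lp.inner_single_left]

theorem norm_stdVec (i : I) : ‖(stdVec i : SqSum I)‖ = 1 := by
  simp [stdVec, lp.norm_single]

theorem single_eq_smul_stdVec (i : I) (c : ℂ) :
    (lp.single 2 i c : SqSum I) = c • stdVec i := by
  rw [stdVec, ← lp.single_smul, smul_eq_mul, mul_one]

theorem hasSum_stdVec (v : SqSum I) : HasSum (fun i => v i • stdVec i) v := by
  simpa only [single_eq_smul_stdVec] using lp.hasSum_single (by norm_num : (2 : ENNReal) ≠ ⊤) v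

theorem orthonormal_stdVec : Orthonormal ℂ (stdVec : I → SqSum I) := by
  rw [orthonormal_iff_ite]
  intro i j
  rw [inner_stdVec, stdVec_apply]

theorem norm_apply_le_norm_sqSum {I : Type*} (v : SqSum I) (i : I) : ‖v i‖ ≤ ‖v‖ :=
  lp.norm_apply_le_norm (by norm_num) v i

theorem sqSum_clm_ext {E : Type*} [NormedAddCommGroup E] [NormedSpace ℂ E]
    {T T' : SqSum I →L[ℂ] E} (h : ∀ i, T (stdVec i) = T' (stdVec i)) : T = T' := by
  ext v
  refine ((hasSum_stdVec v).mapL T).unique ?_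
  simpa only [map_smul, h] using (hasSum_stdVec v).mapL T'

theorem sqSum_clm_ext_entries {J : Type*} {T T' : SqSum I →L[ℂ] SqSum J}
    (h : ∀ i j, T (stdVec i) j = T' (stdVec i) j) : T = T' :=
  sqSum_clm_ext fun i => lp.ext (funext (h i))

theorem adjoint_stdVec_apply (T : SqSum I →L[ℂ] SqSum J) (i : I) (j : J) :
    T.adjoint (stdVec j) i = star (T (stdVec i) j) := by
  rw [← inner_stdVec, ContinuousLinearMap.adjoint_inner_right, ← inner_conj_symm, inner_stdVec]
  rfl

/-- The isometry `ℓ²(I) → ℓ²(J)` sending the basis vector `i` to `w i` times the basis vector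
`f i`, for an injection `f` and unimodular weights `w`. -/
def weightedPush (f : I → J) (hf : Function.Injective f) (w : I → ℂ) (hw : ∀ i, ‖w i‖ = 1) :
    SqSum I →ₗᵢ[ℂ] SqSum J :=
  OrthogonalFamily.linearIsometry (𝕜 := ℂ) (G := fun _ : I => ℂ)
    (Orthonormal.orthogonalFamily (𝕜 := ℂ) (v := fun i => w i • (stdVec (f i) : SqSum J))
      ⟨fun i => by rw [norm_smul, hw, norm_stdVec, one_mul], fun i j hij => by
        simp only
        rw [inner_smul_left, inner_smul_right, orthonormal_stdVec.2 (hf.ne hij), mul_zero,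
          mul_zero]⟩)

theorem weightedPush_stdVec (f : I → J) (hf : Function.Injective f) (w : I → ℂ)
    (hw : ∀ i, ‖w i‖ = 1) (i : I) :
    weightedPush f hf w hw (stdVec i) = w i • stdVec (f i) := by
  rw [weightedPush, stdVec, OrthogonalFamily.linearIsometry_apply_single]
  simp

/-- Extension by zero along an injection, as an operator on `ℓ²`. -/
def sqPush (f : I → J) (hf : Function.Injective f) : SqSum I →L[ℂ] SqSum J :=
  (weightedPush f hf 1 (by simp)).toContinuousLinearMap

theorem sqPush_stdVec (f : I → J) (hf : Function.Injective f) (i : I) :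
    sqPush f hf (stdVec i) = stdVec (f i) := by
  simp [sqPush, weightedPush_stdVec]

theorem norm_sqPush {I : Type*} (f : I → J) (hf : Function.Injective f) (v : SqSum I) :
    ‖sqPush f hf v‖ = ‖v‖ :=
  (weightedPush f hf 1 (by simp)).norm_map v

theorem norm_sqPush_le {I : Type*} (f : I → J) (hf : Function.Injective f) : ‖sqPush f hf‖ ≤ 1 :=
  (sqPush f hf).opNorm_le_bound zero_le_one fun v => by rw [norm_sqPush, one_mul]

/-- Restriction along an injection, the adjoint of `sqPush`. -/
def sqPull (f : I → J) (hf : Function.Injective f) : SqSum J →L[ℂ] SqSum I :=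
  (sqPush f hf).adjoint

theorem sqPull_apply (f : I → J) (hf : Function.Injective f) (v : SqSum J) (i : I) :
    sqPull f hf v i = v (f i) := by
  rw [← inner_stdVec, sqPull, ContinuousLinearMap.adjoint_inner_right, sqPush_stdVec,
    inner_stdVec]

theorem norm_sqPull_le {I : Type*} (f : I → J) (hf : Function.Injective f) : ‖sqPull f hf‖ ≤ 1 := by
  rw [sqPull, LinearIsometryEquiv.norm_map]
  exact norm_sqPush_le f hf

theorem sqPull_stdVec (f : I → J) (hf : Function.Injective f) (i : I) :
    sqPull f hf (stdVec (f i)) = stdVec i := by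
  refine lp.ext (funext fun j => ?_)
  simp only [sqPull_apply, stdVec_apply, hf.eq_iff]

theorem sqPull_stdVec_of_notMem (f : I → J) (hf : Function.Injective f) {j : J}
    (hj : ∀ i, f i ≠ j) : sqPull f hf (stdVec j) = 0 := by
  refine lp.ext (funext fun i => ?_)
  rw [sqPull_apply, stdVec_apply, if_neg (hj i)]
  rfl

theorem sqPush_apply (f : I → J) (hf : Function.Injective f) (v : SqSum I) (i : I) :
    sqPush f hf v (f i) = v i := by
  rw [← inner_stdVec, ← ContinuousLinearMap.adjoint_inner_left, ← sqPull, sqPull_stdVec,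
    inner_stdVec]

theorem sqPush_apply_of_notMem (f : I → J) (hf : Function.Injective f) (v : SqSum I) {j : J}
    (hj : ∀ i, f i ≠ j) : sqPush f hf v j = 0 := by
  rw [← inner_stdVec, ← ContinuousLinearMap.adjoint_inner_left, ← sqPull,
    sqPull_stdVec_of_notMem f hf hj, inner_zero_left]

theorem sqPull_sqPush (f : I → J) (hf : Function.Injective f) (v : SqSum I) :
    sqPull f hf (sqPush f hf v) = v := by
  refine lp.ext (funext fun i => ?_)
  rw [sqPull_apply, sqPush_apply]

end SquareSummable

section Laurent

variable (k : ℕ)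

/-- The translation operator `e_μ ↦ e_{μ+g}` on `B^k ≅ ℓ²(ℝ^k)`. -/
def sqShift (g : Fin k → ℝ) : SqSum (Fin k → ℝ) →L[ℂ] SqSum (Fin k → ℝ) :=
  sqPush (fun x => x + g) (add_left_injective g)

theorem sqShift_stdVec (g x : Fin k → ℝ) : sqShift k g (stdVec x) = stdVec (x + g) :=
  sqPush_stdVec _ _ _

/-- The graph of the representation of trigonometric polynomials by multiplication operators
on `ℓ²(ℝ^k)`. -/
def laurentGraph : Subalgebra ℂ (APB k × (SqSum (Fin k → ℝ) →L[ℂ] SqSum (Fin k → ℝ))) :=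
  Algebra.adjoin ℂ (Set.range fun g => (apExp k g, sqShift k g))

theorem laurentGraph_toSubmodule :
    (laurentGraph k).toSubmodule =
      Submodule.span ℂ (Set.range fun g => (apExp k g, sqShift k g)) := by
  apply Algebra.adjoin_eq_span_of_subset
  refine subset_trans ?_ Submodule.subset_span
  intro x hx
  induction hx using Submonoid.closure_induction with
  | mem x h => exact h
  | one =>
    refine ⟨0, Prod.ext (apExp_zero k) (sqSum_clm_ext fun i => ?_)⟩
    simp [sqShift_stdVec]
  | mul x y _ _ hx hy =>
    obtain ⟨a, rfl⟩ := hx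
    obtain ⟨b, rfl⟩ := hy
    refine ⟨a + b, Prod.ext (apExp_add k a b) (sqSum_clm_ext fun i => ?_)⟩
    simp [sqShift_stdVec, add_left_comm, add_comm]

/-- Trigonometric polynomials paired with their vectors of coefficients. -/
def trigGraph : Submodule ℂ (APB k × SqSum (Fin k → ℝ)) :=
  Submodule.span ℂ (Set.range fun g => (apExp k g, stdVec g))

theorem trigGraph_mem_APalg {x : APB k × SqSum (Fin k → ℝ)} (hx : x ∈ trigGraph k) :
    x.1 ∈ APalg k := by
  induction hx using Submodule.span_induction with
  | mem x h => obtain ⟨g, rfl⟩ := h; exact apExp_mem k g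
  | zero => exact (APalg k).zero_mem
  | add x y _ _ h1 h2 => exact (APalg k).add_mem h1 h2
  | smul c x _ h => exact (APalg k).smul_mem h c

/-- Parseval's identity for trigonometric polynomials. -/
theorem trigGraph_parseval {x y : APB k × SqSum (Fin k → ℝ)} (hx : x ∈ trigGraph k)
    (hy : y ∈ trigGraph k) : bohrCoeff k ⇑(star x.1 * y.1) 0 = inner ℂ x.2 y.2 := by
  induction hx using Submodule.span_induction with
  | mem x h =>
    obtain ⟨g, rfl⟩ := h
    rw [star_apExp, bohrCoeff_apExp_mul k (trigGraph_mem_APalg k hy), inner_stdVec, zero_sub,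
      neg_neg]
    induction hy using Submodule.span_induction with
    | mem y h =>
      obtain ⟨g', rfl⟩ := h
      rw [bohrCoeff_apExp, stdVec_apply]
    | zero => exact bohrCoeff_zero k g
    | add x y hx hy h1 h2 =>
      rw [Prod.fst_add, bohrCoeff_add k (trigGraph_mem_APalg k hx) (trigGraph_mem_APalg k hy),
        h1, h2]
      rfl
    | smul c x hx h =>
      rw [Prod.smul_fst, bohrCoeff_smul k c (trigGraph_mem_APalg k hx), h]
      rfl
  | zero => simpa using bohrCoeff_zero k 0
  | add x x' hx hx' h1 h2 =>
    have hx := star_mem_APalg k (trigGraph_mem_APalg k hx)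
    have hx' := star_mem_APalg k (trigGraph_mem_APalg k hx')
    have hy := trigGraph_mem_APalg k hy
    rw [Prod.fst_add, star_add, add_mul, bohrCoeff_add k ((APalg k).mul_mem hx hy)
      ((APalg k).mul_mem hx' hy), h1, h2, Prod.snd_add, inner_add_left]
  | smul c x hx h =>
    have hx := star_mem_APalg k (trigGraph_mem_APalg k hx)
    have hy := trigGraph_mem_APalg k hy
    rw [Prod.smul_fst, star_smul, smul_mul_assoc, bohrCoeff_smul k _ ((APalg k).mul_mem hx hy), h,
      Prod.smul_snd, inner_smul_left]
    rfl

theorem laurentGraph_apply {p : APB k × (SqSum (Fin k → ℝ) →L[ℂ] SqSum (Fin k → ℝ))}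
    (hp : p ∈ laurentGraph k) {x : APB k × SqSum (Fin k → ℝ)} (hx : x ∈ trigGraph k) :
    (p.1 * x.1, p.2 x.2) ∈ trigGraph k := by
  have hp' : p ∈ Submodule.span ℂ (Set.range fun g => (apExp k g, sqShift k g)) := by
    rw [← laurentGraph_toSubmodule]
    exact hp
  clear hp
  induction hp' using Submodule.span_induction with
  | mem p h =>
    obtain ⟨g, rfl⟩ := h
    induction hx using Submodule.span_induction with
    | mem x h =>
      obtain ⟨g', rfl⟩ := h
      refine Submodule.subset_span ⟨g' + g, ?_⟩
      simp only [sqShift_stdVec, add_comm g' g, apExp_add]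
    | zero =>
      convert (trigGraph k).zero_mem using 1
      simp
    | add x y _ _ h1 h2 => simpa [mul_add] using (trigGraph k).add_mem h1 h2
    | smul c x _ h => simpa using (trigGraph k).smul_mem c h
  | zero =>
    convert (trigGraph k).zero_mem using 1
    simp
  | add x y _ _ h1 h2 => simpa [add_mul] using (trigGraph k).add_mem h1 h2
  | smul c x _ h => simpa using (trigGraph k).smul_mem c h

theorem mean_star_mul_self_le {f q : APB k} (hf : f ∈ APalg k) (hq : q ∈ APalg k) :
    (bohrCoeff k ⇑(star (f * q) * (f * q)) 0).re ≤
      ‖f‖ ^ 2 * (bohrCoeff k ⇑(star q * q) 0).re := by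
  have hqq := (APalg k).mul_mem (star_mem_APalg k hq) hq
  have hfq := (APalg k).mul_mem hf hq
  have hfqq := (APalg k).mul_mem (star_mem_APalg k hfq) hfq
  have hsm := (APalg k).smul_mem hqq ((‖f‖ ^ 2 : ℝ) : ℂ)
  have hval : ∀ (g : APB k) x, (star g * g) x = ((‖g x‖ ^ 2 : ℝ) : ℂ) := by
    intro g x
    rw [BoundedContinuousFunction.mul_apply, BoundedContinuousFunction.star_apply,
      Complex.star_def, Complex.conj_mul']
    norm_cast
  have h := le_re_mean k ((APalg k).sub_mem hsm hfqq) (c := 0) fun x => by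
    rw [BoundedContinuousFunction.sub_apply, BoundedContinuousFunction.smul_apply, hval, hval,
      BoundedContinuousFunction.mul_apply, norm_mul, smul_eq_mul, ← Complex.ofReal_mul,
      ← Complex.ofReal_sub, Complex.ofReal_re, mul_pow, ← sub_mul]
    have := f.norm_coe_le_norm x
    have : ‖f x‖ ^ 2 ≤ ‖f‖ ^ 2 := by gcongr
    exact mul_nonneg (by linarith) (by positivity)
  rw [bohrCoeff_sub k hsm hfqq, bohrCoeff_smul k _ hqq, Complex.sub_re,
    Complex.re_ofReal_mul] at h
  linarith

theorem laurentGraph_mem_APalg {p : APB k × (SqSum (Fin k → ℝ) →L[ℂ] SqSum (Fin k → ℝ))}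
    (hp : p ∈ laurentGraph k) :
    p.1 ∈ APalg k ∧ ∀ x y, p.2 (stdVec x) y = bohrCoeff k p.1 (y - x) := by
  have hp' : p ∈ Submodule.span ℂ (Set.range fun g => (apExp k g, sqShift k g)) := by
    rw [← laurentGraph_toSubmodule]
    exact hp
  clear hp
  induction hp' using Submodule.span_induction with
  | mem p h =>
    obtain ⟨g, rfl⟩ := h
    refine ⟨apExp_mem k g, fun x y => ?_⟩
    simp only [sqShift_stdVec, stdVec_apply, bohrCoeff_apExp, sub_eq_iff_eq_add, add_comm g]
  | zero => exact ⟨(APalg k).zero_mem, fun x y => (bohrCoeff_zero k _).symm⟩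
  | add p q _ _ h1 h2 =>
    refine ⟨(APalg k).add_mem h1.1 h2.1, fun x y => ?_⟩
    rw [Prod.fst_add, bohrCoeff_add k h1.1 h2.1, ← h1.2, ← h2.2]
    rfl
  | smul c p _ h =>
    refine ⟨(APalg k).smul_mem h.1 c, fun x y => ?_⟩
    rw [Prod.smul_fst, bohrCoeff_smul k c h.1, ← h.2]
    rfl

theorem laurentGraph_norm_le {p : APB k × (SqSum (Fin k → ℝ) →L[ℂ] SqSum (Fin k → ℝ))}
    (hp : p ∈ laurentGraph k) : ‖p.2‖ ≤ ‖p.1‖ := by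
  have hf : p.1 ∈ APalg k := (laurentGraph_mem_APalg k hp).1
  refine p.2.opNorm_le_bound (norm_nonneg _) fun v => ?_
  have hfin : ∀ s : Finset (Fin k → ℝ),
      (∑ i ∈ s, v i • apExp k i, ∑ i ∈ s, v i • stdVec i) ∈ trigGraph k := by
    intro s
    have : (∑ i ∈ s, v i • apExp k i, ∑ i ∈ s, v i • (stdVec i : SqSum (Fin k → ℝ))) =
        ∑ i ∈ s, v i • (apExp k i, (stdVec i : SqSum (Fin k → ℝ))) := by
      simp [Prod.ext_iff, Prod.fst_sum, Prod.snd_sum]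
    rw [this]
    exact (trigGraph k).sum_mem fun i _ =>
      (trigGraph k).smul_mem _ (Submodule.subset_span ⟨i, rfl⟩)
  refine le_of_tendsto_of_tendsto' ((p.2.continuous.tendsto v).comp (hasSum_stdVec v)).norm
    ((hasSum_stdVec v).norm.const_mul _) fun s => ?_
  set x : APB k × SqSum (Fin k → ℝ) := (∑ i ∈ s, v i • apExp k i, ∑ i ∈ s, v i • stdVec i)
  have hx : x ∈ trigGraph k := hfin s
  have h1 := trigGraph_parseval k hx hx
  have h2 := trigGraph_parseval k (laurentGraph_apply k hp hx) (laurentGraph_apply k hp hx)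
  have h3 := mean_star_mul_self_le k hf (trigGraph_mem_APalg k hx)
  simp only at h2
  rw [h1, h2, inner_self_eq_norm_sq_to_K, inner_self_eq_norm_sq_to_K] at h3
  have hre : ∀ r : ℝ, (((r : ℂ) ^ 2)).re = r ^ 2 := fun r => by norm_cast
  erw [hre, hre, ← mul_pow] at h3
  exact (sq_le_sq₀ (norm_nonneg _) (by positivity)).1 h3

end Laurent

section LaurentOperator

variable (k : ℕ)

theorem laurentGraph_closure {p : APB k × (SqSum (Fin k → ℝ) →L[ℂ] SqSum (Fin k → ℝ))}
    (hp : p ∈ (laurentGraph k).topologicalClosure) :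
    p.1 ∈ APalg k ∧ ‖p.2‖ ≤ ‖p.1‖ ∧ ∀ x y, p.2 (stdVec x) y = bohrCoeff k p.1 (y - x) := by
  have hp : p ∈ closure (laurentGraph k : Set _) := hp
  have h1 : p.1 ∈ APalg k := by
    have hcl : IsClosed {q : APB k × (SqSum (Fin k → ℝ) →L[ℂ] SqSum (Fin k → ℝ)) |
        q.1 ∈ APalg k} :=
      (Subalgebra.isClosed_topologicalClosure _).preimage continuous_fst
    exact closure_minimal (fun q hq => (laurentGraph_mem_APalg k hq).1) hcl hp
  refine ⟨h1, ?_, fun x y => ?_⟩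
  · exact closure_minimal (fun q hq => laurentGraph_norm_le k hq)
      (isClosed_le continuous_snd.norm continuous_fst.norm) hp
  · obtain ⟨q, hq, hlim⟩ := mem_closure_iff_seq_limit.1 hp
    have ha : Tendsto (fun n => (q n).2 (stdVec x) y) atTop (nhds (p.2 (stdVec x) y)) := by
      have hc : Continuous fun T : SqSum (Fin k → ℝ) →L[ℂ] SqSum (Fin k → ℝ) =>
          inner ℂ (stdVec y) (T (stdVec x)) := by fun_prop
      simpa only [inner_stdVec, Function.comp_def] using
        ((hc.comp continuous_snd).tendsto p).comp hlim
    have hb : Tendsto (fun n => (q n).2 (stdVec x) y) atTop (nhds (bohrCoeff k p.1 (y - x))) := by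
      rw [tendsto_iff_norm_sub_tendsto_zero]
      have h0 : Tendsto (fun n => ‖(q n).1 - p.1‖) atTop (nhds 0) :=
        tendsto_iff_norm_sub_tendsto_zero.1 ((continuous_fst.tendsto p).comp hlim)
      refine squeeze_zero (fun _ => norm_nonneg _) (fun n => ?_) h0
      have hn := laurentGraph_mem_APalg k (hq n)
      rw [hn.2, ← bohrCoeff_sub k hn.1 h1]
      exact norm_bohrCoeff_le k ((APalg k).sub_mem hn.1 h1) _
    exact tendsto_nhds_unique ha hb

theorem exists_laurentGraph_closure {f : APB k} (hf : f ∈ APalg k) :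
    ∃ p ∈ (laurentGraph k).topologicalClosure, p.1 = f := by
  have hcl : IsClosed ((laurentGraph k).topologicalClosure :
      Set (APB k × (SqSum (Fin k → ℝ) →L[ℂ] SqSum (Fin k → ℝ)))) :=
    Subalgebra.isClosed_topologicalClosure _
  let C := (laurentGraph k).topologicalClosure.toSubmodule
  have : CompleteSpace C := hcl.completeSpace_coe
  let F : C →L[ℂ] APB k := (ContinuousLinearMap.fst ℂ _ _).comp C.subtypeL
  have hF : AntilipschitzWith 1 F := by
    refine AddMonoidHomClass.antilipschitz_of_bound F fun p => ?_
    rw [NNReal.coe_one, one_mul]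
    exact max_le le_rfl (laurentGraph_closure k p.2).2.1
  have hrange : IsClosed (Set.range F) := hF.isClosed_range F.uniformContinuous
  have hmem : f ∈ Set.range F := by
    refine APalg_induction k (p := fun f => f ∈ Set.range F) ?_ ?_ ?_ ?_ ?_ hf
    · intro g
      exact ⟨⟨(apExp k g, sqShift k g), (laurentGraph k).le_topologicalClosure
        (Algebra.subset_adjoin ⟨g, rfl⟩)⟩, rfl⟩
    · exact ⟨0, map_zero F⟩
    · rintro _ _ ⟨p, rfl⟩ ⟨q, rfl⟩
      exact ⟨p + q, map_add F p q⟩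
    · rintro c _ ⟨p, rfl⟩
      exact ⟨c • p, map_smul F c p⟩
    · intro f h
      refine hrange.closure_subset (Metric.mem_closure_iff.2 fun ε hε => ?_)
      obtain ⟨g, hg, hfg⟩ := h (ε / 2) (half_pos hε)
      exact ⟨g, hg, (dist_eq_norm f g).trans_le hfg |>.trans_lt (half_lt_self hε)⟩
  obtain ⟨p, rfl⟩ := hmem
  exact ⟨p.1, p.2, rfl⟩

open Classical in
/-- The operator of multiplication by `f ∈ AP^k` on the Besicovitch space. -/
def lau (f : APB k) : SqSum (Fin k → ℝ) →L[ℂ] SqSum (Fin k → ℝ) :=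
  if hf : f ∈ APalg k then (exists_laurentGraph_closure k hf).choose.2 else 0

theorem lau_mem {f : APB k} (hf : f ∈ APalg k) :
    (f, lau k f) ∈ (laurentGraph k).topologicalClosure := by
  have h := (exists_laurentGraph_closure k hf).choose_spec
  rw [lau, dif_pos hf]
  convert h.1 using 1
  exact Prod.ext h.2.symm rfl

theorem lau_stdVec_apply {f : APB k} (hf : f ∈ APalg k) (x y : Fin k → ℝ) :
    lau k f (stdVec x) y = bohrCoeff k f (y - x) :=
  (laurentGraph_closure k (lau_mem k hf)).2.2 x y

theorem lau_eq {p : APB k × (SqSum (Fin k → ℝ) →L[ℂ] SqSum (Fin k → ℝ))}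
    (hp : p ∈ (laurentGraph k).topologicalClosure) : lau k p.1 = p.2 := by
  have h := laurentGraph_closure k hp
  refine sqSum_clm_ext_entries fun x y => ?_
  rw [lau_stdVec_apply k h.1, h.2.2]

theorem lau_mul {f g : APB k} (hf : f ∈ APalg k) (hg : g ∈ APalg k) :
    lau k (f * g) = lau k f * lau k g :=
  lau_eq k (Subalgebra.mul_mem _ (lau_mem k hf) (lau_mem k hg))

theorem lau_stdVec_zero_apply {f : APB k} (hf : f ∈ APalg k) (y : Fin k → ℝ) :
    lau k f (stdVec 0) y = bohrCoeff k f y := by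
  rw [lau_stdVec_apply k hf, sub_zero]

/-- Bohr-Fourier coefficients of a product are convolutions. -/
theorem hasSum_bohrCoeff_mul {f g : APB k} (hf : f ∈ APalg k) (hg : g ∈ APalg k)
    (y : Fin k → ℝ) :
    HasSum (fun x => bohrCoeff k g x * bohrCoeff k f (y - x)) (bohrCoeff k ⇑(f * g) y) := by
  have h := ((hasSum_stdVec (lau k g (stdVec 0))).mapL (lau k f)).mapL (innerSL ℂ (stdVec y))
  simp only [map_smul, innerSL_apply_apply, inner_stdVec, lau_stdVec_apply k hf,
    lau_stdVec_zero_apply k hg, smul_eq_mul] at h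
  rwa [← mul_apply_eq_comp, ← lau_mul k hf hg,
    lau_stdVec_zero_apply k ((APalg k).mul_mem hf hg)] at h

end LaurentOperator

section Membership

variable (k : ℕ)

theorem APmem_iff {Δ : Set (Fin k → ℝ)} {f : APB k} :
    APmem k Δ f ↔ f ∈ APalg k ∧ ∀ lam, lam ∉ Δ → bohrCoeff k f lam = 0 := by
  simp only [APmem, bohrSpectrum, Set.subset_def, Set.mem_ofPred_eq, not_imp_comm, ne_eq]

/-- The algebra `AP^k_Δ` for an additive submonoid `Δ`. -/
def apSub (Δ : AddSubmonoid (Fin k → ℝ)) : Subalgebra ℂ (APB k) where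
  carrier := {f | APmem k Δ f}
  mul_mem' := by
    intro f g hf hg
    simp only [Set.mem_ofPred_eq, APmem_iff] at hf hg ⊢
    refine ⟨(APalg k).mul_mem hf.1 hg.1, fun y hy => ?_⟩
    refine (hasSum_bohrCoeff_mul k hf.1 hg.1 y).unique ?_
    convert hasSum_zero using 2 with x
    by_cases hx : x ∈ Δ
    · rw [hf.2 (y - x), mul_zero]
      intro hyx
      exact hy (by simpa using Δ.add_mem hyx hx)
    · rw [hg.2 x hx, zero_mul]
  add_mem' := by
    intro f g hf hg
    simp only [Set.mem_ofPred_eq, APmem_iff] at hf hg ⊢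
    refine ⟨(APalg k).add_mem hf.1 hg.1, fun y hy => ?_⟩
    rw [bohrCoeff_add k hf.1 hg.1, hf.2 y hy, hg.2 y hy, add_zero]
  algebraMap_mem' := by
    intro c
    simp only [Set.mem_ofPred_eq, APmem_iff]
    refine ⟨(APalg k).algebraMap_mem c, fun y hy => ?_⟩
    rw [Algebra.algebraMap_eq_smul_one, ← apExp_zero, bohrCoeff_smul k c (apExp_mem k 0),
      bohrCoeff_apExp, if_neg, mul_zero]
    rintro rfl
    exact hy Δ.zero_mem

theorem bohrCoeff_algebraMap (c : ℂ) (y : Fin k → ℝ) :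
    bohrCoeff k ⇑(algebraMap ℂ (APB k) c) y = if y = 0 then c else 0 := by
  rw [Algebra.algebraMap_eq_smul_one, ← apExp_zero, bohrCoeff_smul k c (apExp_mem k 0),
      bohrCoeff_apExp, mul_ite, mul_one, mul_zero]

/-- The algebra `APW^k_Δ` for an additive submonoid `Δ`. -/
def apwSub (Δ : AddSubmonoid (Fin k → ℝ)) : Subalgebra ℂ (APB k) where
  carrier := {f | APWmem k Δ f}
  mul_mem' := by
    intro f g hf hg
    refine ⟨(apSub k Δ).mul_mem hf.1 hg.1, ?_⟩
    have h1 : Summable fun p : (Fin k → ℝ) × (Fin k → ℝ) =>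
        ‖bohrCoeff k g p.1‖ * ‖bohrCoeff k f p.2‖ :=
      hg.2.mul_of_nonneg hf.2 (fun _ => norm_nonneg _) fun _ => norm_nonneg _
    let e : (Fin k → ℝ) × (Fin k → ℝ) ≃ (Fin k → ℝ) × (Fin k → ℝ) :=
      { toFun := fun p => (p.2, p.1 - p.2)
        invFun := fun p => (p.1 + p.2, p.1)
        left_inv := fun p => by simp
        right_inv := fun p => by simp }
    have h2 := e.summable_iff.2 h1
    refine Summable.of_nonneg_of_le (fun _ => norm_nonneg _) (fun y => ?_) h2.prod
    have h3 := h2.prod_factor y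
    simp only [Function.comp_apply, e, Equiv.coe_fn_mk, ← norm_mul] at h3 ⊢
    rw [← (hasSum_bohrCoeff_mul k hf.1.1 hg.1.1 y).tsum_eq]
    exact norm_tsum_le_tsum_norm h3
  add_mem' := by
    intro f g hf hg
    refine ⟨(apSub k Δ).add_mem hf.1 hg.1, ?_⟩
    refine Summable.of_nonneg_of_le (fun _ => norm_nonneg _) (fun y => ?_) (hf.2.add hg.2)
    rw [bohrCoeff_add k hf.1.1 hg.1.1]
    exact norm_add_le _ _
  algebraMap_mem' := by
    intro c
    refine ⟨(apSub k Δ).algebraMap_mem c, ?_⟩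
    refine summable_of_ne_finset_zero (s := {0}) fun y hy => ?_
    rw [bohrCoeff_algebraMap, if_neg (by simpa using hy), norm_zero]

theorem matrix_mul_mem {R A : Type*} [CommSemiring R] [Semiring A] [Algebra R A]
    (B : Subalgebra R A) {l m n : Type*} [Fintype m] {M : Matrix l m A} {N : Matrix m n A}
    (hM : ∀ i j, M i j ∈ B) (hN : ∀ i j, N i j ∈ B) (i : l) (j : n) : (M * N) i j ∈ B :=
  B.sum_mem fun x _ => B.mul_mem (hM i x) (hN x j)

end Membership

section LeftIdeals

theorem maximal_mul_central_mem {A : Type*} [Ring A] {J : Ideal A} (hJ : J.IsMaximal) {y : A}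
    (hy : ∀ a, y * a = a * y) (hyJ : y ∉ J) {z : A} (hz : y * z ∈ J) : z ∈ J := by
  let K : Ideal A :=
    { carrier := {z | y * z ∈ J}
      add_mem' := fun {a b} ha hb => by
        simp only [Set.mem_ofPred_eq, mul_add] at *
        exact J.add_mem ha hb
      zero_mem' := by simp
      smul_mem' := fun c z hz => by
        simp only [Set.mem_ofPred_eq, smul_eq_mul] at *
        rw [← mul_assoc, hy, mul_assoc]
        exact J.mul_mem_left c hz }
  have hK : K ≠ ⊤ := by
    intro h
    have : (1 : A) ∈ K := h ▸ Submodule.mem_top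
    exact hyJ (by simpa [K] using this)
  have hJK : J = K := hJ.eq_of_le hK fun z hz => J.mul_mem_left y hz
  rw [hJK]
  exact hz

variable {A : Type*} [NormedRing A] [NormedAlgebra ℂ A] [CompleteSpace A]

theorem exists_sub_algebraMap_mem_maximal {J : Ideal A} (hJ : J.IsMaximal) {x : A}
    (hx : ∀ a, x * a = a * x) : ∃ c : ℂ, x - algebraMap ℂ A c ∈ J := by
  by_contra! hno
  have : IsClosed ((J.restrictScalars ℂ : Submodule ℂ A) : Set A) := Ideal.IsMaximal.isClosed (I := J)
  let M := A ⧸ (J.restrictScalars ℂ)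
  have hnt : Nontrivial M := by
    refine Submodule.Quotient.nontrivial_iff.2 ?_
    intro h
    exact hJ.ne_top (by rwa [Submodule.restrictScalars_eq_top_iff] at h)
  let L : A →ₗ[ℂ] A := LinearMap.mulLeft ℂ x
  have hL : J.restrictScalars ℂ ≤ (J.restrictScalars ℂ).comap L :=
    fun z hz => J.mul_mem_left x hz
  let X : M →L[ℂ] M := LinearMap.mkContinuous ((J.restrictScalars ℂ).mapQ _ L hL) ‖x‖ (by
    intro m
    refine le_of_forall_pos_le_add fun ε hε => ?_
    obtain ⟨a, rfl, ha⟩ := Submodule.Quotient.norm_mk_lt (S := J.restrictScalars ℂ) m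
      (ε := ε / (‖x‖ + 1)) (by positivity)
    rw [Submodule.mapQ_apply]
    refine (Submodule.Quotient.norm_mk_le _ _).trans ((norm_mul_le x a).trans ?_)
    calc ‖x‖ * ‖a‖ ≤ ‖x‖ * (‖Submodule.Quotient.mk a‖ + ε / (‖x‖ + 1)) := by gcongr
      _ ≤ _ := by
        rw [mul_add]
        gcongr
        rw [mul_div_assoc', div_le_iff₀ (by positivity)]
        nlinarith [norm_nonneg x])
  obtain ⟨c, hc⟩ := spectrum.nonempty (A := M →L[ℂ] M) X
  apply hc
  set y := algebraMap ℂ A c - x with hy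
  have hyc : ∀ a, y * a = a * y := fun a => by
    rw [hy, sub_mul, mul_sub, hx, Algebra.commutes]
  have hyJ : y ∉ J := fun h => hno c (by simpa [hy] using J.neg_mem h)
  have hval : ∀ a : A, (algebraMap ℂ (M →L[ℂ] M) c - X) (Submodule.Quotient.mk a) =
      Submodule.Quotient.mk (y * a) := by
    intro a
    have h1 : X (Submodule.Quotient.mk a) = Submodule.Quotient.mk (x * a) := rfl
    rw [_root_.sub_apply, h1, Algebra.algebraMap_eq_smul_one,
      _root_.smul_apply, one_apply_eq_self, ← Submodule.Quotient.mk_smul,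
      ← Submodule.Quotient.mk_sub, hy, sub_mul, Algebra.smul_def]
  have hbij : Function.Bijective (algebraMap ℂ (M →L[ℂ] M) c - X) := by
    constructor
    · rw [injective_iff_map_eq_zero]
      intro m
      obtain ⟨a, rfl⟩ := Submodule.Quotient.mk_surjective _ m
      rw [hval, Submodule.Quotient.mk_eq_zero, Submodule.Quotient.mk_eq_zero]
      exact maximal_mul_central_mem hJ hyc hyJ
    · intro m
      obtain ⟨b, rfl⟩ := Submodule.Quotient.mk_surjective _ m
      have htop : J ⊔ Ideal.span {y} = ⊤ := by
        refine hJ.out.2 _ (left_lt_sup.2 fun h => hyJ (h ?_))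
        exact Ideal.subset_span rfl
      obtain ⟨j, hj, z, hz, hjz⟩ := Submodule.mem_sup.1
        (show (1 : A) ∈ J ⊔ Ideal.span {y} from htop ▸ Submodule.mem_top)
      obtain ⟨a, rfl⟩ := Submodule.mem_span_singleton.1 hz
      refine ⟨Submodule.Quotient.mk (b * a), ?_⟩
      rw [hval, Submodule.Quotient.eq]
      have : y * (b * a) - b = -(b * j) := by
        rw [hyc, mul_assoc, ← smul_eq_mul a y, ← sub_eq_zero]
        rw [eq_sub_of_add_eq' hjz]
        noncomm_ring
      rw [this]
      exact J.neg_mem (J.mul_mem_left b hj)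
  let e := ContinuousLinearEquiv.ofBijective _ (LinearMap.ker_eq_bot.2 hbij.1)
    (LinearMap.range_eq_top.2 hbij.2)
  exact ⟨ContinuousLinearEquiv.toUnit e, rfl⟩

/-- A maximal left ideal induces a unitary character on any group of central contractions. -/
theorem exists_character_mem_maximal (h1 : ‖(1 : A)‖ ≤ 1) {Γ : Type*} [AddCommGroup Γ]
    {s : Γ → A} (hs0 : s 0 = 1) (hsadd : ∀ g h, s (g + h) = s g * s h)
    (hcentral : ∀ g a, s g * a = a * s g) (hnorm : ∀ g, ‖s g‖ ≤ 1) {J : Ideal A}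
    (hJ : J.IsMaximal) :
    ∃ χ : AddChar Γ Circle, ∀ g, s g - algebraMap ℂ A (χ g) ∈ J := by
  have hconst : ∀ c d : ℂ, algebraMap ℂ A c - algebraMap ℂ A d ∈ J → c = d := by
    intro c d h
    by_contra hcd
    have hu : IsUnit (algebraMap ℂ A (c - d)) := (sub_ne_zero.2 hcd).isUnit.map _
    rw [← map_sub] at h
    exact hJ.ne_top (Ideal.eq_top_of_isUnit_mem _ h hu)
  choose c hc using fun g => exists_sub_algebraMap_mem_maximal hJ (hcentral g)
  have hc0 : c 0 = 1 := by
    refine (hconst _ _ ?_).symm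
    simpa [hs0] using hc 0
  have hcadd : ∀ g h, c (g + h) = c g * c h := by
    intro g h
    refine hconst _ _ ?_
    have h2 : algebraMap ℂ A (c (g + h)) - algebraMap ℂ A (c g * c h) =
        -(s (g + h) - algebraMap ℂ A (c (g + h))) + s g * (s h - algebraMap ℂ A (c h)) +
          algebraMap ℂ A (c h) * (s g - algebraMap ℂ A (c g)) := by
      rw [hsadd, map_mul, mul_sub, mul_sub, ← Algebra.commutes (c h) (s g),
        ← Algebra.commutes (c h) (algebraMap ℂ A (c g))]
      abel
    rw [h2]
    exact J.add_mem (J.add_mem (J.neg_mem (hc _)) (J.mul_mem_left _ (hc _)))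
      (J.mul_mem_left _ (hc _))
  have hle : ∀ g, ‖c g‖ ≤ 1 := by
    intro g
    have hmem : c g ∈ spectrum ℂ (s g) := by
      intro hu
      refine hJ.ne_top (Ideal.eq_top_of_isUnit_mem _ (J.neg_mem (hc g)) ?_)
      rwa [neg_sub]
    refine (spectrum.norm_le_norm_mul_of_mem hmem).trans ?_
    exact mul_le_one₀ (hnorm g) (norm_nonneg _) h1
  have hone : ∀ g, ‖c g‖ = 1 := by
    intro g
    refine le_antisymm (hle g) ?_
    have h3 : ‖c g‖ * ‖c (-g)‖ = 1 := by
      rw [← norm_mul, ← hcadd, add_neg_cancel, hc0, norm_one]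
    calc (1 : ℝ) = ‖c g‖ * ‖c (-g)‖ := h3.symm
      _ ≤ ‖c g‖ * 1 := by gcongr; exact hle _
      _ = ‖c g‖ := mul_one _
  refine ⟨⟨fun g => ⟨c g, mem_sphere_zero_iff_norm.2 (hone g)⟩, Subtype.ext hc0,
    fun g h => Subtype.ext (hcadd g h)⟩, hc⟩

/-- Left invertibility of a series with coefficients multiplied by central contractions follows
from left invertibility of all its values at unitary characters. -/
theorem exists_left_inverse_of_characters (h1 : ‖(1 : A)‖ ≤ 1) {Γ : Type*} [AddCommGroup Γ]
    {s : Γ → A} (hs0 : s 0 = 1) (hsadd : ∀ g h, s (g + h) = s g * s h)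
    (hcentral : ∀ g a, s g * a = a * s g) (hnorm : ∀ g, ‖s g‖ ≤ 1)
    {a : Γ → A} (ha : Summable fun g => ‖a g‖)
    (hinv : ∀ χ : AddChar Γ Circle, ∃ u, u * ∑' g, (χ g : ℂ) • a g = 1) :
    ∃ r, r * ∑' g, a g * s g = 1 := by
  by_contra hno
  have hne : Ideal.span {∑' g, a g * s g} ≠ ⊤ := by
    intro h
    obtain ⟨r, hr⟩ := Submodule.mem_span_singleton.1
      (show (1 : A) ∈ Ideal.span {∑' g, a g * s g} from h ▸ Submodule.mem_top)
    exact hno ⟨r, hr⟩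
  obtain ⟨J, hJ, hle⟩ := Ideal.exists_le_maximal _ hne
  have hmem : ∑' g, a g * s g ∈ J := hle (Ideal.subset_span rfl)
  obtain ⟨χ, hχ⟩ := exists_character_mem_maximal h1 hs0 hsadd hcentral hnorm hJ
  obtain ⟨u, hu⟩ := hinv χ
  have hs1 : Summable fun g => a g * s g :=
    Summable.of_norm_bounded ha fun g => (norm_mul_le _ _).trans
      (mul_le_of_le_one_right (norm_nonneg _) (hnorm g))
  have hs2 : Summable fun g => (χ g : ℂ) • a g :=
    Summable.of_norm_bounded ha fun g => by rw [norm_smul, Circle.norm_coe, one_mul]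
  have hdiff : ∑' g, a g * s g - ∑' g, (χ g : ℂ) • a g ∈ J := by
    rw [← hs1.tsum_sub hs2]
    have hcl : IsClosed (J : Set A) := Ideal.IsMaximal.isClosed
    refine hcl.mem_of_tendsto (hs1.sub hs2).hasSum (Eventually.of_forall fun t => ?_)
    refine J.sum_mem fun g _ => ?_
    rw [Algebra.smul_def, Algebra.commutes, ← mul_sub]
    exact J.mul_mem_left _ (hχ g)
  have h4 : ∑' g, (χ g : ℂ) • a g ∈ J := by
    simpa using J.sub_mem hmem hdiff
  exact hJ.ne_top ((Ideal.eq_top_iff_one _).2 (hu ▸ J.mul_mem_left u h4))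

end LeftIdeals

section Commutant

/-- Left invertibility in the commutant of a set of operators, tested on unitary characters. -/
theorem exists_left_inverse_commutant {X : Type*} [NormedAddCommGroup X] [NormedSpace ℂ X]
    [CompleteSpace X] (K : Set (X →L[ℂ] X)) {Γ : Type*} [AddCommGroup Γ]
    {s : Γ → X →L[ℂ] X} (hs0 : s 0 = 1) (hsadd : ∀ g h, s (g + h) = s g * s h)
    (hsK : ∀ g, s g ∈ K) (hs : ∀ g, ∀ c ∈ K, c * s g = s g * c) (hnorm : ∀ g, ‖s g‖ ≤ 1)
    {a : Γ → X →L[ℂ] X} (ha : Summable fun g => ‖a g‖) (haK : ∀ g, ∀ c ∈ K, c * a g = a g * c)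
    (hinv : ∀ χ : AddChar Γ Circle, ∃ u, (∀ c ∈ K, c * u = u * c) ∧
      u * ∑' g, (χ g : ℂ) • a g = 1) :
    (Summable fun g => a g * s g) ∧
      ∃ r, (∀ c ∈ K, c * r = r * c) ∧ r * ∑' g, a g * s g = 1 := by
  let A : Subalgebra ℂ (X →L[ℂ] X) := Subalgebra.centralizer ℂ K
  have hmem : ∀ {u}, u ∈ A ↔ ∀ c ∈ K, c * u = u * c := Subalgebra.mem_centralizer_iff ℂ
  have hAc : IsClosed (A : Set (X →L[ℂ] X)) := Set.isClosed_centralizer _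
  have : CompleteSpace A := hAc.completeSpace_coe
  have htsum : ∀ {f : Γ → A}, (Summable fun g => ‖f g‖) → ∑' g, (f g : X →L[ℂ] X) = ↑(∑' g, f g) :=
    fun hf => (hf.of_norm.hasSum.mapL A.toSubmodule.subtypeL).tsum_eq
  obtain ⟨r, hr⟩ := exists_left_inverse_of_characters (A := A)
    (s := fun g => ⟨s g, hmem.2 (hs g)⟩) (a := fun g => ⟨a g, hmem.2 (haK g)⟩)
    ContinuousLinearMap.norm_id_le (Subtype.ext hs0) (fun g h => Subtype.ext (hsadd g h))
    (fun g u => Subtype.ext (hmem.1 u.2 _ (hsK g))) hnorm ha (fun χ => by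
      obtain ⟨u, huK, hu⟩ := hinv χ
      refine ⟨⟨u, hmem.2 huK⟩, Subtype.ext ?_⟩
      rw [Subalgebra.coe_mul, ← htsum]
      · exact hu
      · refine ha.congr fun g => ?_
        change ‖a g‖ = ‖(χ g : ℂ) • a g‖
        rw [norm_smul, Circle.norm_coe, one_mul])
  have hsum : Summable fun g => ‖a g * s g‖ :=
    Summable.of_nonneg_of_le (fun _ => norm_nonneg _) (fun g => (norm_mul_le _ _).trans
      (mul_le_of_le_one_right (norm_nonneg _) (hnorm g))) ha
  refine ⟨hsum.of_norm, r, hmem.1 r.2, ?_⟩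
  have h2 := congrArg (Subtype.val) hr
  rw [Subalgebra.coe_mul, ← htsum] at h2
  · exact h2
  · exact hsum

end Commutant

section SummableFunctions

/-- The space `ℓ¹(Γ, B)`. -/
abbrev AbsSum (Γ B : Type*) [NormedRing B] : Type _ := lp (fun _ : Γ => B) 1

variable {Γ : Type*} {B : Type*} [NormedRing B]

theorem AbsSum.summable_norm (f : AbsSum Γ B) : Summable fun g => ‖f g‖ := by
  simpa using (lp.memℓp f).summable (by simp)

theorem AbsSum.norm_eq (f : AbsSum Γ B) : ‖f‖ = ∑' g, ‖f g‖ := by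
  rw [lp.norm_eq_tsum_rpow (by simp)]
  simp

variable [NormedAlgebra ℂ B]

/-- The operator `f ↦ b ∘ f ∘ φ` on `ℓ¹(Γ, B)`. -/
def absSumOp (φ : Equiv.Perm Γ) (b : B →L[ℂ] B) : AbsSum Γ B →L[ℂ] AbsSum Γ B :=
  have hle : ∀ (f : AbsSum Γ B) g, ‖b (f (φ g))‖ ≤ ‖b‖ * ‖f (φ g)‖ :=
    fun f g => b.le_opNorm _
  have hsum : ∀ f : AbsSum Γ B, Summable fun g => ‖b‖ * ‖f (φ g)‖ :=
    fun f => (φ.summable_iff.2 f.summable_norm).mul_left _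
  LinearMap.mkContinuous
    { toFun := fun f => ⟨fun g => b (f (φ g)), memℓp_gen (by
        simpa using Summable.of_nonneg_of_le (fun _ => norm_nonneg _) (hle f) (hsum f))⟩
      map_add' := fun f f' => lp.ext (funext fun g => map_add b _ _)
      map_smul' := fun c f => lp.ext (funext fun g => map_smul b _ _) } ‖b‖ (by
    intro f
    rw [AbsSum.norm_eq, AbsSum.norm_eq, ← φ.tsum_eq (fun g => ‖f g‖), ← tsum_mul_left]
    exact (Summable.of_nonneg_of_le (fun _ => norm_nonneg _) (hle f) (hsum f)).tsum_le_tsum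
      (hle f) (hsum f))

theorem absSumOp_apply (φ : Equiv.Perm Γ) (b : B →L[ℂ] B) (f : AbsSum Γ B) (g : Γ) :
    absSumOp φ b f g = b (f (φ g)) := rfl

theorem norm_absSumOp_le (φ : Equiv.Perm Γ) (b : B →L[ℂ] B) : ‖absSumOp φ b‖ ≤ ‖b‖ := by
  unfold absSumOp
  exact LinearMap.mkContinuous_norm_le _ (norm_nonneg _) _

theorem absSumOp_single [DecidableEq Γ] (φ : Equiv.Perm Γ) (b : B →L[ℂ] B) (g : Γ) (x : B) :
    absSumOp φ b (lp.single 1 g x) = lp.single 1 (φ.symm g) (b x) := by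
  refine lp.ext (funext fun h => ?_)
  simp only [absSumOp_apply, lp.single_apply, Pi.single_apply, Equiv.eq_symm_apply]
  split_ifs <;> simp

/-- Entrywise left multiplication on `ℓ¹(Γ, B)`. -/
def absSumMulLeft (Γ : Type*) {B : Type*} [NormedRing B] [NormedAlgebra ℂ B] :
    B →L[ℂ] (AbsSum Γ B →L[ℂ] AbsSum Γ B) := LinearMap.mkContinuous
  { toFun := fun b => absSumOp 1 (ContinuousLinearMap.mul ℂ B b)
    map_add' := fun b c => ContinuousLinearMap.ext fun f => lp.ext (funext fun x => by
      simp [absSumOp_apply])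
    map_smul' := fun b c => ContinuousLinearMap.ext fun f => lp.ext (funext fun x => by
      simp [absSumOp_apply]) } 1
  fun b => by
    rw [one_mul]
    exact (norm_absSumOp_le _ _).trans (ContinuousLinearMap.opNorm_mul_apply_le ℂ B b)

theorem absSumMulLeft_apply (b : B) (f : AbsSum Γ B) (g : Γ) :
    absSumMulLeft Γ b f g = b * f g := rfl

theorem norm_absSumMulLeft_le (b : B) : ‖absSumMulLeft Γ b‖ ≤ ‖b‖ :=
  (norm_absSumOp_le _ _).trans (ContinuousLinearMap.opNorm_mul_apply_le ℂ B b)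

theorem absSumMulLeft_mul (b c : B) :
    absSumMulLeft Γ b * absSumMulLeft Γ c = absSumMulLeft Γ (b * c) :=
  ContinuousLinearMap.ext fun f => lp.ext (funext fun x => by
    simp [absSumMulLeft_apply, mul_assoc])

theorem absSumMulLeft_one : absSumMulLeft Γ (1 : B) = 1 :=
  ContinuousLinearMap.ext fun f => lp.ext (funext fun x => by simp [absSumMulLeft_apply])

theorem absSumMulLeft_single [DecidableEq Γ] (b : B) (g : Γ) (x : B) :
    absSumMulLeft Γ b (lp.single 1 g x) = lp.single 1 g (b * x) :=
  absSumOp_single 1 (ContinuousLinearMap.mul ℂ B b) g x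

/-- Entrywise right multiplication on `ℓ¹(Γ, B)`. -/
def absSumMulRight (Γ : Type*) {B : Type*} [NormedRing B] [NormedAlgebra ℂ B] (b : B) :
    AbsSum Γ B →L[ℂ] AbsSum Γ B :=
  absSumOp 1 ((ContinuousLinearMap.mul ℂ B).flip b)

theorem absSumMulRight_apply (b : B) (f : AbsSum Γ B) (g : Γ) :
    absSumMulRight Γ b f g = f g * b := rfl

theorem absSumMulRight_single [DecidableEq Γ] (b : B) (g : Γ) (x : B) :
    absSumMulRight Γ b (lp.single 1 g x) = lp.single 1 g (x * b) :=
  absSumOp_single 1 ((ContinuousLinearMap.mul ℂ B).flip b) g x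

variable [AddCommGroup Γ]

/-- Translation of `ℓ¹(Γ, B)`. -/
def absSumShift {Γ : Type*} [AddCommGroup Γ] (B : Type*) [NormedRing B] [NormedAlgebra ℂ B]
    (g : Γ) : AbsSum Γ B →L[ℂ] AbsSum Γ B :=
  absSumOp (Equiv.subRight g) 1

theorem absSumShift_apply (g : Γ) (f : AbsSum Γ B) (h : Γ) :
    absSumShift B g f h = f (h - g) := rfl

theorem norm_absSumShift_le (g : Γ) : ‖absSumShift B g‖ ≤ 1 :=
  (norm_absSumOp_le _ _).trans ContinuousLinearMap.norm_id_le

theorem absSumShift_zero : absSumShift B (0 : Γ) = 1 :=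
  ContinuousLinearMap.ext fun f => lp.ext (funext fun x => by simp [absSumShift_apply])

theorem absSumShift_add (g h : Γ) :
    absSumShift B (g + h) = absSumShift B g * absSumShift B h :=
  ContinuousLinearMap.ext fun f => lp.ext (funext fun x => by
    simp [absSumShift_apply, sub_sub])

theorem absSumShift_single [DecidableEq Γ] (g h : Γ) (x : B) :
    absSumShift B g (lp.single 1 h x) = lp.single 1 (h + g) x :=
  absSumOp_single (Equiv.subRight g) 1 h x

/-- The translations and right multiplications on `ℓ¹(Γ, B)`. -/
def convolutionSymmetries (Γ B : Type*) [AddCommGroup Γ] [NormedRing B] [NormedAlgebra ℂ B] :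
    Set (AbsSum Γ B →L[ℂ] AbsSum Γ B) :=
  Set.range (absSumShift B) ∪ Set.range (absSumMulRight Γ)

theorem absSumShift_comm (g : Γ) :
    ∀ c ∈ convolutionSymmetries Γ B, c * absSumShift B g = absSumShift B g * c := by
  rintro _ (⟨h, rfl⟩ | ⟨b, rfl⟩)
  · rw [← absSumShift_add, ← absSumShift_add, add_comm]
  · exact ContinuousLinearMap.ext fun f => lp.ext (funext fun x => by
      simp [absSumShift_apply, absSumMulRight_apply])

theorem absSumMulLeft_comm (b : B) :
    ∀ c ∈ convolutionSymmetries Γ B, c * absSumMulLeft Γ b = absSumMulLeft Γ b * c := by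
  rintro _ (⟨h, rfl⟩ | ⟨b, rfl⟩)
  · exact ContinuousLinearMap.ext fun f => lp.ext (funext fun x => by
      simp [absSumShift_apply, absSumMulLeft_apply])
  · exact ContinuousLinearMap.ext fun f => lp.ext (funext fun x => by
      simp [absSumMulRight_apply, absSumMulLeft_apply, mul_assoc])

theorem apply_single_of_commute [DecidableEq Γ] {R : AbsSum Γ B →L[ℂ] AbsSum Γ B}
    (hR : ∀ c ∈ convolutionSymmetries Γ B, c * R = R * c) (g : Γ) (b : B) :
    R (lp.single 1 g b) = absSumShift B g (absSumMulRight Γ b (R (lp.single 1 0 1))) := by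
  have h3 := hR (absSumShift B g) (Or.inl ⟨g, rfl⟩)
  have h4 := hR (absSumMulRight Γ b) (Or.inr ⟨b, rfl⟩)
  have h6 := DFunLike.congr_fun h3 (absSumMulRight Γ b (lp.single 1 0 1))
  have h7 := DFunLike.congr_fun h4 (lp.single 1 0 1)
  simp only [mul_apply_eq_comp] at h6 h7
  rw [h7, h6, absSumMulRight_single, absSumShift_single, zero_add, one_mul]

variable [CompleteSpace B]

/-- Evaluation of the generalized Fourier series with coefficients in `B` at a character. -/
def absSumEval (χ : AddChar Γ Circle) : AbsSum Γ B →L[ℂ] B :=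
  have hsum : ∀ f : AbsSum Γ B, Summable fun g => (χ g : ℂ) • f g := fun f =>
    Summable.of_norm_bounded f.summable_norm fun g => by
      rw [norm_smul, Circle.norm_coe, one_mul]
  LinearMap.mkContinuous
    { toFun := fun f => ∑' g, (χ g : ℂ) • f g
      map_add' := fun f f' => by
        rw [← (hsum f).tsum_add (hsum f')]
        simp only [lp.coeFn_add, Pi.add_apply, smul_add]
      map_smul' := fun c f => by
        rw [RingHom.id_apply, ← (hsum f).tsum_const_smul]
        simp only [lp.coeFn_smul, Pi.smul_apply, smul_comm c] } 1 (by
    intro f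
    rw [one_mul, AbsSum.norm_eq]
    refine tsum_of_norm_bounded f.summable_norm.hasSum fun g => ?_
    rw [norm_smul, Circle.norm_coe, one_mul])

theorem absSumEval_apply (χ : AddChar Γ Circle) (f : AbsSum Γ B) :
    absSumEval χ f = ∑' g, (χ g : ℂ) • f g := rfl

theorem absSumEval_single [DecidableEq Γ] (χ : AddChar Γ Circle) (g : Γ) (x : B) :
    absSumEval χ (lp.single 1 g x) = (χ g : ℂ) • x := by
  rw [absSumEval_apply, tsum_eq_single g, lp.single_apply_self]
  intro h hh
  rw [lp.single_apply_ne _ _ _ hh, smul_zero]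

theorem absSumEval_shift_mulRight (χ : AddChar Γ Circle) (f : AbsSum Γ B) (g : Γ) (b : B) :
    absSumEval χ (absSumShift B g (absSumMulRight Γ b f)) =
      absSumEval χ f * ((χ g : ℂ) • b) := by
  have hsum : Summable fun g => (χ g : ℂ) • f g :=
    Summable.of_norm_bounded f.summable_norm fun g => by
      rw [norm_smul, Circle.norm_coe, one_mul]
  rw [absSumEval_apply, absSumEval_apply, ← hsum.tsum_mul_right, ← (Equiv.addRight g).tsum_eq]
  refine tsum_congr fun h => ?_
  simp only [absSumShift_apply, absSumMulRight_apply, Equiv.coe_addRight,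
    add_sub_cancel_right, AddChar.map_add_eq_mul, Circle.coe_mul, smul_mul_smul_comm]

/-- The **Bochner-Phillips theorem**: if the values of an absolutely convergent series with
operator coefficients are left invertible at all unitary characters, then the series has a left
inverse of the same kind. -/
theorem bochner_phillips {D : Γ → B} (hD : Summable fun g => ‖D g‖)
    (hinv : ∀ χ : AddChar Γ Circle, ∃ u, u * ∑' g, (χ g : ℂ) • D g = 1) :
    ∃ E : Γ → B, (Summable fun g => ‖E g‖) ∧ ∀ χ : AddChar Γ Circle,
      (∑' g, (χ g : ℂ) • E g) * ∑' g, (χ g : ℂ) • D g = 1 := by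
  classical
  have hDχ : ∀ χ : AddChar Γ Circle, Summable fun g => (χ g : ℂ) • D g := fun χ =>
    Summable.of_norm_bounded hD fun g => by rw [norm_smul, Circle.norm_coe, one_mul]
  have hLD : Summable fun g => ‖absSumMulLeft Γ (D g)‖ :=
    Summable.of_nonneg_of_le (fun _ => ContinuousLinearMap.opNorm_nonneg _)
      (fun g => norm_absSumMulLeft_le _) hD
  obtain ⟨hsum, R, hRK, hR⟩ := exists_left_inverse_commutant (convolutionSymmetries Γ B)
    absSumShift_zero absSumShift_add (fun g => Or.inl ⟨g, rfl⟩) absSumShift_comm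
    norm_absSumShift_le hLD (fun g => absSumMulLeft_comm _)
    (fun χ => by
      obtain ⟨u, hu⟩ := hinv χ
      refine ⟨absSumMulLeft Γ u, absSumMulLeft_comm u, ?_⟩
      have h2 : ∑' g, (χ g : ℂ) • absSumMulLeft Γ (D g) =
          absSumMulLeft Γ (∑' g, (χ g : ℂ) • D g) := by
        refine HasSum.tsum_eq ?_
        simpa only [map_smul] using (hDχ χ).hasSum.mapL (absSumMulLeft Γ)
      rw [h2, absSumMulLeft_mul, hu, absSumMulLeft_one])
  refine ⟨R (lp.single 1 0 1), (R (lp.single 1 0 1)).summable_norm, fun χ => ?_⟩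
  have h8 := (hsum.hasSum.mapL (ContinuousLinearMap.apply ℂ (AbsSum Γ B)
    (lp.single 1 0 1))).mapL ((absSumEval χ).comp R)
  have h9 : ∀ g, absSumEval χ (R ((absSumMulLeft Γ (D g) * absSumShift B g) (lp.single 1 0 1))) =
      absSumEval χ (R (lp.single 1 0 1)) * ((χ g : ℂ) • D g) := by
    intro g
    rw [← absSumEval_shift_mulRight, mul_apply_eq_comp, absSumShift_single, absSumMulLeft_single,
      apply_single_of_commute hRK, zero_add, mul_one]
  have h11 : absSumEval χ
      (R ((∑' g, absSumMulLeft Γ (D g) * absSumShift B g) (lp.single 1 0 1))) = 1 := by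
    rw [← mul_apply_eq_comp, hR, one_apply_eq_self, absSumEval_single, AddChar.map_zero_eq_one,
      Circle.coe_one, one_smul]
  simp only [ContinuousLinearMap.apply_apply, ContinuousLinearMap.comp_apply, h9, h11] at h8
  exact ((hDχ χ).hasSum.mul_left _).unique h8

end SummableFunctions

section ToeplitzOperators

variable (k : ℕ) {n : ℕ}

/-- `T` is the compression of the Laurent operator of `F` to `ℓ²(Fin n × Λ)`, stated in terms of
the coordinates of `T`. -/
def IsToeplitz (Λ : Set (Fin k → ℝ)) (F : Matrix (Fin n) (Fin n) (APB k))
    (T : SqSum (Fin n × Λ) →L[ℂ] SqSum (Fin n × Λ)) : Prop :=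
  ∀ p q : Fin n × Λ, T (stdVec p) q = bohrCoeff k (F q.1 p.1) (q.2.1 - p.2.1)

variable {k}

theorem representsToeplitz_iff {S Sg : Set (Fin k → ℝ)} {F : Matrix (Fin n) (Fin n) (APB k)}
    {T : BesCol k n (S ∩ Sg) →L[ℂ] BesCol k n (S ∩ Sg)} :
    RepresentsToeplitz k S Sg n n F T ↔ IsToeplitz k (S ∩ Sg) F T := by
  have h : ∀ p q, inner ℂ (lp.single 2 q (1 : ℂ)) (T (lp.single 2 p (1 : ℂ))) =
      T (stdVec p) q := fun p q => inner_stdVec q _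
  simp only [RepresentsToeplitz, IsToeplitz, h, Prod.forall]

theorem IsToeplitz.unique {Λ : Set (Fin k → ℝ)} {F : Matrix (Fin n) (Fin n) (APB k)}
    {T T' : SqSum (Fin n × Λ) →L[ℂ] SqSum (Fin n × Λ)} (h : IsToeplitz k Λ F T)
    (h' : IsToeplitz k Λ F T') : T = T' :=
  sqSum_clm_ext_entries fun p q => (h p q).trans (h' p q).symm

theorem isToeplitz_one (Λ : Set (Fin k → ℝ)) :
    IsToeplitz k Λ (1 : Matrix (Fin n) (Fin n) (APB k)) 1 := by
  intro p q
  rw [one_apply_eq_self, stdVec_apply, Matrix.one_apply]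
  by_cases h : q.1 = p.1
  · rw [if_pos h, ← apExp_zero, bohrCoeff_apExp]
    simp only [Prod.ext_iff, h, true_and, sub_eq_zero, Subtype.ext_iff]
  · rw [if_neg h, if_neg fun h' => h (congrArg Prod.fst h')]
    exact (bohrCoeff_zero k _).symm

theorem norm_lau_le {f : APB k} (hf : f ∈ APalg k) : ‖lau k f‖ ≤ ‖f‖ :=
  (laurentGraph_closure k (lau_mem k hf)).2.1

theorem exists_isToeplitz (Λ : Set (Fin k → ℝ)) {F : Matrix (Fin n) (Fin n) (APB k)}
    (hF : ∀ i j, F i j ∈ APalg k) :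
    ∃ T, IsToeplitz k Λ F T ∧ ‖T‖ ≤ ∑ i, ∑ j, ‖F i j‖ := by
  have hinj : ∀ i : Fin n, Function.Injective fun x : Λ => (i, x) := fun i _ _ h =>
    congrArg Prod.snd h
  let r : Fin n → SqSum (Fin n × Λ) →L[ℂ] SqSum (Fin k → ℝ) := fun j =>
    (sqPush (Subtype.val : Λ → Fin k → ℝ) Subtype.val_injective).comp (sqPull _ (hinj j))
  let r' : Fin n → SqSum (Fin k → ℝ) →L[ℂ] SqSum (Fin n × Λ) := fun j =>
    (sqPush _ (hinj j)).comp (sqPull (Subtype.val : Λ → Fin k → ℝ) Subtype.val_injective)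
  have hr : ∀ j p, r j (stdVec p) = if j = p.1 then stdVec p.2.1 else 0 := by
    intro j p
    simp only [r, ContinuousLinearMap.comp_apply]
    split_ifs with h
    · subst h
      erw [sqPull_stdVec _ (hinj p.1) p.2, sqPush_stdVec]
    · rw [sqPull_stdVec_of_notMem _ _ fun i hi => h (congrArg Prod.fst hi), map_zero]
  have hr' : ∀ j v q, r' j v q = if j = q.1 then v q.2.1 else 0 := by
    intro j v q
    simp only [r', ContinuousLinearMap.comp_apply]
    split_ifs with h
    · subst h
      erw [sqPush_apply _ (hinj q.1) _ q.2, sqPull_apply]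
    · rw [sqPush_apply_of_notMem _ _ _ fun i hi => h (congrArg Prod.fst hi)]
  have hrn : ∀ j, ‖r j‖ ≤ 1 := fun j =>
    (ContinuousLinearMap.opNorm_comp_le _ _).trans <|
      mul_le_one₀ (norm_sqPush_le _ _) (norm_nonneg _) (norm_sqPull_le _ _)
  have hrn' : ∀ j, ‖r' j‖ ≤ 1 := fun j =>
    (ContinuousLinearMap.opNorm_comp_le _ _).trans <|
      mul_le_one₀ (norm_sqPush_le _ _) (norm_nonneg _) (norm_sqPull_le _ _)
  refine ⟨∑ i, ∑ j, (r' i).comp ((lau k (F i j)).comp (r j)), fun p q => ?_, ?_⟩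
  · simp only [_root_.sum_apply, ContinuousLinearMap.comp_apply, hr, lp.coeFn_sum,
      Finset.sum_apply, hr']
    rw [Finset.sum_eq_single q.1 (fun i _ hi => Finset.sum_eq_zero fun j _ => if_neg hi)
      (fun h => absurd (Finset.mem_univ _) h), Finset.sum_eq_single p.1 (fun j _ hj => ?_)
      (fun h => absurd (Finset.mem_univ _) h), if_pos rfl, if_pos rfl, lau_stdVec_apply k (hF _ _)]
    rw [if_neg hj, map_zero, if_pos rfl]
    rfl
  · refine (norm_sum_le _ _).trans (Finset.sum_le_sum fun i _ => (norm_sum_le _ _).trans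
      (Finset.sum_le_sum fun j _ => ?_))
    refine (ContinuousLinearMap.opNorm_comp_le _ _).trans ?_
    refine (mul_le_of_le_one_left (norm_nonneg _) (hrn' i)).trans ?_
    refine (ContinuousLinearMap.opNorm_comp_le _ _).trans ?_
    exact (mul_le_of_le_one_right (norm_nonneg _) (hrn j)).trans (norm_lau_le (hF i j))

/-- Coordinates of a Toeplitz operator applied to a vector. -/
theorem IsToeplitz.hasSum_apply {Λ : Set (Fin k → ℝ)} {F : Matrix (Fin n) (Fin n) (APB k)}
    {T : SqSum (Fin n × Λ) →L[ℂ] SqSum (Fin n × Λ)} (h : IsToeplitz k Λ F T)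
    (v : SqSum (Fin n × Λ)) (q : Fin n × Λ) :
    HasSum (fun p => v p * bohrCoeff k (F q.1 p.1) (q.2.1 - p.2.1)) (T v q) := by
  have h1 := ((hasSum_stdVec v).mapL T).mapL (innerSL ℂ (stdVec q))
  simpa only [map_smul, innerSL_apply_apply, inner_stdVec, smul_eq_mul, h _ q] using h1

/-- If `φ` vanishes off `Λ` and is given by `v` on `Λ`, then `T v` is computed by matrix
multiplication. -/
theorem IsToeplitz.apply_eq_bohrCoeff {Λ : Set (Fin k → ℝ)} {F : Matrix (Fin n) (Fin n) (APB k)}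
    (hF : ∀ i j, F i j ∈ APalg k)
    {T : SqSum (Fin n × Λ) →L[ℂ] SqSum (Fin n × Λ)} (h : IsToeplitz k Λ F T)
    {φ : Fin n → APB k} (hφ : ∀ i, φ i ∈ APalg k) (μ : Fin k → ℝ)
    {v : SqSum (Fin n × Λ)} (hv : ∀ p, v p = bohrCoeff k (φ p.1) (p.2.1 - μ)) (q : Fin n × Λ)
    (h0 : ∀ i, ∀ x, x ∉ Λ → bohrCoeff k (φ i) (x - μ) * bohrCoeff k (F q.1 i) (q.2.1 - x) = 0) :
    T v q = bohrCoeff k ⇑(∑ i, F q.1 i * φ i) (q.2.1 - μ) := by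
  have hin : ∀ i, HasSum (fun x : Λ => v (i, x) * bohrCoeff k (F q.1 i) (q.2.1 - x))
      (bohrCoeff k ⇑(F q.1 i * φ i) (q.2.1 - μ)) := by
    intro i
    have h1 := hasSum_bohrCoeff_mul k (hF q.1 i) (hφ i) (q.2.1 - μ)
    rw [← (Equiv.subRight μ).hasSum_iff] at h1
    rw [← Function.Injective.hasSum_iff (Subtype.val_injective : Function.Injective
      (Subtype.val : Λ → Fin k → ℝ))] at h1
    · convert h1 using 2 with x
      simp [hv]
    · intro x hx
      simpa using h0 i x (by simpa using hx)
  rw [bohrCoeff_sum k _ fun i _ => (APalg k).mul_mem (hF q.1 i) (hφ i)]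
  exact ((h.hasSum_apply v q).prod_fiberwise hin).unique (hasSum_fintype _)

theorem IsToeplitz.mul {Λ : Set (Fin k → ℝ)} {F F' : Matrix (Fin n) (Fin n) (APB k)}
    (hF : ∀ i j, F i j ∈ APalg k) (hF' : ∀ i j, F' i j ∈ APalg k)
    {T T' : SqSum (Fin n × Λ) →L[ℂ] SqSum (Fin n × Λ)} (h : IsToeplitz k Λ F T)
    (h' : IsToeplitz k Λ F' T')
    (h0 : ∀ i j l, ∀ μ ∈ Λ, ∀ ν ∈ Λ, ∀ x, x ∉ Λ →
      bohrCoeff k (F' l j) (x - μ) * bohrCoeff k (F i l) (ν - x) = 0) :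
    IsToeplitz k Λ (F * F') (T * T') := by
  intro p q
  exact h.apply_eq_bohrCoeff hF (fun i => hF' i p.1) p.2.1 (fun q => h' p q) q
    fun i x hx => h0 q.1 p.1 i p.2.1 p.2.2 q.2.1 q.2.2 x hx

theorem IsToeplitz.adjoint {Λ : Set (Fin k → ℝ)} {F : Matrix (Fin n) (Fin n) (APB k)}
    (hF : ∀ i j, F i j ∈ APalg k)
    {T : SqSum (Fin n × Λ) →L[ℂ] SqSum (Fin n × Λ)} (h : IsToeplitz k Λ F T) :
    IsToeplitz k Λ F.conjTranspose T.adjoint := by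
  intro p q
  rw [adjoint_stdVec_apply, h, Matrix.conjTranspose_apply, bohrCoeff_star k (hF _ _), neg_sub]

end ToeplitzOperators

section ToeplitzInvertibility

variable {k n : ℕ}

/-- Passing to a subgroup of frequencies preserves invertibility. -/
theorem exists_inverse_compression {Λ Λ' : Set (Fin k → ℝ)} (hsub : Λ' ⊆ Λ)
    {F : Matrix (Fin n) (Fin n) (APB k)}
    (h0 : ∀ i j, ∀ μ ∈ Λ', ∀ ν ∈ Λ, ν ∉ Λ' →
      bohrCoeff k (F i j) (ν - μ) = 0 ∧ bohrCoeff k (F i j) (μ - ν) = 0)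
    {T V : SqSum (Fin n × Λ) →L[ℂ] SqSum (Fin n × Λ)} (hT : IsToeplitz k Λ F T)
    (hVT : V * T = 1) (hTV : T * V = 1)
    {T' : SqSum (Fin n × Λ') →L[ℂ] SqSum (Fin n × Λ')} (hT' : IsToeplitz k Λ' F T') :
    ∃ V' : SqSum (Fin n × Λ') →L[ℂ] SqSum (Fin n × Λ'), V' * T' = 1 ∧ T' * V' = 1 := by
  let f : Fin n × Λ' → Fin n × Λ := fun p => (p.1, ⟨p.2.1, hsub p.2.2⟩)
  have hf : Function.Injective f := fun p q h =>
    Prod.ext (congrArg (fun x => x.1) h :) (Subtype.ext (congrArg (fun x => x.2.1) h :))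
  have hf' : ∀ q : Fin n × Λ, q.2.1 ∉ Λ' → ∀ i, f i ≠ q := by
    rintro q hq i rfl
    exact hq i.2.2
  have h1 : T.comp (sqPush f hf) = (sqPush f hf).comp T' := by
    refine sqSum_clm_ext_entries fun p q => ?_
    rw [ContinuousLinearMap.comp_apply, ContinuousLinearMap.comp_apply, sqPush_stdVec, hT]
    by_cases hq : q.2.1 ∈ Λ'
    · have : q = f (q.1, ⟨q.2.1, hq⟩) := rfl
      rw [this, sqPush_apply, hT']
    · rw [sqPush_apply_of_notMem f hf _ (hf' q hq)]
      exact (h0 _ _ _ p.2.2 _ q.2.2 hq).1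
  have h2 : (sqPull f hf).comp T = T'.comp (sqPull f hf) := by
    refine sqSum_clm_ext_entries fun p q => ?_
    rw [ContinuousLinearMap.comp_apply, ContinuousLinearMap.comp_apply, sqPull_apply, hT]
    by_cases hp : p.2.1 ∈ Λ'
    · have : p = f (p.1, ⟨p.2.1, hp⟩) := rfl
      rw [this, sqPull_stdVec, hT']
    · rw [sqPull_stdVec_of_notMem f hf (hf' p hp), map_zero]
      exact (h0 _ _ _ q.2.2 _ p.2.2 hp).2
  refine ⟨(sqPull f hf).comp (V.comp (sqPush f hf)), ?_, ?_⟩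
  · ext1 v
    have e1 := DFunLike.congr_fun h1 v
    have e2 := DFunLike.congr_fun hVT (sqPush f hf v)
    simp only [mul_apply_eq_comp, ContinuousLinearMap.comp_apply, one_apply_eq_self] at *
    rw [← e1, e2, sqPull_sqPush]
  · ext1 v
    have e1 := DFunLike.congr_fun h2 (V (sqPush f hf v))
    have e2 := DFunLike.congr_fun hTV (sqPush f hf v)
    simp only [mul_apply_eq_comp, ContinuousLinearMap.comp_apply, one_apply_eq_self] at *
    rw [← e1, e2, sqPull_sqPush]

end ToeplitzInvertibility

section OperatorSeries

theorem HasSum.clm_apply_const {ι E F : Type*} [NormedAddCommGroup E] [NormedSpace ℂ E]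
    [NormedAddCommGroup F] [NormedSpace ℂ F] {f : ι → E →L[ℂ] F} {a : E →L[ℂ] F}
    (h : HasSum f a) (x : E) : HasSum (fun i => f i x) (a x) :=
  h.mapL (ContinuousLinearMap.apply ℂ F x)

/-- The Bochner-Phillips theorem for operator-valued Fourier series, formulated strongly. -/
theorem bochner_phillips_operators {Γ H : Type*} [AddCommGroup Γ] [NormedAddCommGroup H]
    [NormedSpace ℂ H] [CompleteSpace H] {D : Γ → H →L[ℂ] H} (hD : Summable fun g => ‖D g‖)
    {W U : AddChar Γ Circle → H →L[ℂ] H} (hUW : ∀ χ, U χ * W χ = 1) (hWU : ∀ χ, W χ * U χ = 1)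
    (hW : ∀ χ a, (∀ x, HasSum (fun g => (χ g : ℂ) • D g x) (a x)) → a = W χ) :
    ∃ E : Γ → H →L[ℂ] H, (Summable fun g => ‖E g‖) ∧
      ∀ χ x, HasSum (fun g => (χ g : ℂ) • E g x) (U χ x) := by
  have hs : ∀ (C : Γ → H →L[ℂ] H) (_ : Summable fun g => ‖C g‖) (χ : AddChar Γ Circle),
      HasSum (fun g => (χ g : ℂ) • C g) (∑' g, (χ g : ℂ) • C g) := by
    intro C hC χ
    refine Summable.hasSum (Summable.of_norm ?_)
    simpa only [norm_smul, Circle.norm_coe, one_mul] using hC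
  have hDW : ∀ χ : AddChar Γ Circle, ∑' g, (χ g : ℂ) • D g = W χ := fun χ =>
    hW χ _ fun x => (hs D hD χ).clm_apply_const x
  obtain ⟨E, hE, hED⟩ := bochner_phillips hD fun χ => ⟨U χ, by rw [hDW, hUW]⟩
  refine ⟨E, hE, fun χ x => ?_⟩
  have : U χ = ∑' g, (χ g : ℂ) • E g := by
    have h := hED χ
    rw [hDW] at h
    exact (left_inv_eq_right_inv h (hWU χ)).symm
  rw [this]
  exact (hs E hE χ).clm_apply_const x

end OperatorSeries

section InverseDecay

variable {k n : ℕ}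

/-- The unitary diagonal operator on `ℓ²(I)` with unimodular weights `w`. -/
def sqDiag {I : Type*} [DecidableEq I] (w : I → ℂ) (hw : ∀ i, ‖w i‖ = 1) :
    SqSum I →L[ℂ] SqSum I :=
  (weightedPush id Function.injective_id w hw).toContinuousLinearMap

theorem sqDiag_stdVec {I : Type*} [DecidableEq I] (w : I → ℂ) (hw : ∀ i, ‖w i‖ = 1) (i : I) :
    sqDiag w hw (stdVec i) = w i • stdVec i :=
  weightedPush_stdVec id Function.injective_id w hw i

theorem sqDiag_apply {I : Type*} [DecidableEq I] (w : I → ℂ) (hw : ∀ i, ‖w i‖ = 1)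
    (v : SqSum I) (i : I) : sqDiag w hw v i = w i * v i := by
  have h : (innerSL ℂ (stdVec i)).comp (sqDiag w hw) = w i • innerSL ℂ (stdVec i) := by
    refine sqSum_clm_ext fun j => ?_
    rw [ContinuousLinearMap.comp_apply, sqDiag_stdVec, map_smul, _root_.smul_apply,
      innerSL_apply_apply, inner_stdVec, stdVec_apply]
    split_ifs with hij
    · rw [hij]
    · simp
  simpa only [ContinuousLinearMap.comp_apply, _root_.smul_apply, innerSL_apply_apply,
    inner_stdVec, smul_eq_mul] using DFunLike.congr_fun h v

/-- The character `g ↦ e^{i⟨g,x⟩}` of `ℝ^k`. -/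
def expChar (x : Fin k → ℝ) : AddChar (Fin k → ℝ) Circle where
  toFun g := Circle.exp (∑ j, g j * x j)
  map_zero_eq_one' := by simp
  map_add_eq_mul' g h := by
    simp only [Pi.add_apply, add_mul, Finset.sum_add_distrib, Circle.exp_add]

theorem coe_expChar (x g : Fin k → ℝ) : (expChar x g : ℂ) = apExp k g x := by
  rw [apExp_apply, mul_comm]
  exact Circle.coe_exp _

/-- The inverse of a Toeplitz operator with symbol in the Wiener algebra has summable
off-diagonal decay. -/
theorem IsToeplitz.exists_inverse_decay {Λ : Set (Fin k → ℝ)} {A : Matrix (Fin n) (Fin n) (APB k)}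
    (hA : ∀ i j, Summable fun g => ‖bohrCoeff k (A i j) g‖)
    {T V : SqSum (Fin n × Λ) →L[ℂ] SqSum (Fin n × Λ)} (hT : IsToeplitz k Λ A T)
    (hVT : V * T = 1) (hTV : T * V = 1) :
    ∃ b : (Fin k → ℝ) → ℝ, Summable b ∧ ∀ p q, ‖V (stdVec p) q‖ ≤ b (q.2.1 - p.2.1) := by
  have hmem : ∀ g i j, (Matrix.of fun i j => bohrCoeff k (A i j) g • apExp k g) i j ∈ APalg k :=
    fun g i j => (APalg k).smul_mem (apExp_mem k g) _
  choose D hDT hDn using fun g => exists_isToeplitz Λ (hmem g)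
  have hDentry : ∀ g p q, D g (stdVec p) q =
      if g = q.2.1 - p.2.1 then bohrCoeff k (A q.1 p.1) (q.2.1 - p.2.1) else 0 := by
    intro g p q
    rw [hDT g p q, Matrix.of_apply, bohrCoeff_smul k _ (apExp_mem k g), bohrCoeff_apExp]
    by_cases h : q.2.1 - p.2.1 = g
    · rw [if_pos h, if_pos h.symm, mul_one, h]
    · rw [if_neg h, if_neg (Ne.symm h), mul_zero]
  have hDs : Summable fun g => ‖D g‖ := by
    refine Summable.of_nonneg_of_le (fun g => norm_nonneg _) (fun g => (hDn g).trans ?_)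
      (summable_sum (s := Finset.univ) fun i _ => summable_sum (s := Finset.univ) fun j _ => hA i j)
    refine Finset.sum_le_sum fun i _ => Finset.sum_le_sum fun j _ => ?_
    rw [Matrix.of_apply, norm_smul]
    exact mul_le_of_le_one_right (norm_nonneg _) (norm_apExp_le k g)
  let M : AddChar (Fin k → ℝ) Circle → SqSum (Fin n × Λ) →L[ℂ] SqSum (Fin n × Λ) := fun χ =>
    sqDiag (fun p => (χ p.2.1 : ℂ)) fun p => Circle.norm_coe _
  have hM1 : ∀ χ, M χ * M χ⁻¹ = 1 := by
    intro χ
    refine sqSum_clm_ext fun p => ?_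
    simp only [M, mul_apply_eq_comp, sqDiag_stdVec, map_smul, smul_smul, one_apply_eq_self]
    rw [AddChar.inv_apply', ← Circle.coe_mul, inv_mul_cancel, Circle.coe_one, one_smul]
  have hM2 : ∀ χ, M χ⁻¹ * M χ = 1 := fun χ => by simpa using hM1 χ⁻¹
  have hconj : ∀ χ (R : SqSum (Fin n × Λ) →L[ℂ] SqSum (Fin n × Λ)) p q,
      (M χ * R * M χ⁻¹) (stdVec p) q = (χ (q.2.1 - p.2.1) : ℂ) * R (stdVec p) q := by
    intro χ R p q
    simp only [M, mul_apply_eq_comp, sqDiag_stdVec, map_smul, lp.coeFn_smul, Pi.smul_apply,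
      sqDiag_apply, smul_eq_mul, AddChar.map_sub_eq_div, AddChar.inv_apply', Circle.coe_inv,
      Circle.coe_div]
    ring
  have hcancel : ∀ χ (P Q : SqSum (Fin n × Λ) →L[ℂ] SqSum (Fin n × Λ)), P * Q = 1 →
      (M χ * P * M χ⁻¹) * (M χ * Q * M χ⁻¹) = 1 := by
    intro χ P Q h
    calc (M χ * P * M χ⁻¹) * (M χ * Q * M χ⁻¹)
        = M χ * (P * ((M χ⁻¹ * M χ) * Q)) * M χ⁻¹ := by simp only [mul_assoc]
      _ = 1 := by rw [hM2, one_mul, h, mul_one, hM1]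
  obtain ⟨E, hE, hEV⟩ := bochner_phillips_operators hDs
    (W := fun χ => M χ * T * M χ⁻¹) (U := fun χ => M χ * V * M χ⁻¹)
    (fun χ => hcancel χ V T hVT) (fun χ => hcancel χ T V hTV) (by
      intro χ a ha
      refine sqSum_clm_ext_entries fun p q => ?_
      rw [hconj, hT]
      have h := (ha (stdVec p)).mapL (innerSL ℂ (stdVec q))
      simp only [innerSL_apply_apply, inner_stdVec, lp.coeFn_smul, Pi.smul_apply, hDentry,
        smul_eq_mul, mul_ite, mul_zero] at h
      simpa using h.unique (hasSum_single (q.2.1 - p.2.1) fun g hg => if_neg hg))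
  refine ⟨fun g => ‖E g‖, hE, fun p q => ?_⟩
  have hle : ∀ g, ‖E g (stdVec p) q‖ ≤ ‖E g‖ := fun g =>
    (norm_apply_le_norm_sqSum _ q).trans <| by
      simpa [norm_stdVec] using (E g).le_opNorm (stdVec p)
  have hsum : Summable fun g => ‖E g (stdVec p) q‖ :=
    Summable.of_nonneg_of_le (fun _ => norm_nonneg _) hle hE
  have hw : wienerSeries k (fun g => E g (stdVec p) q) =
      V (stdVec p) q • apExp k (q.2.1 - p.2.1) := by
    ext x
    have h1 := (hEV (expChar x) (stdVec p)).mapL (innerSL ℂ (stdVec q))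
    simp only [innerSL_apply_apply, inner_stdVec, hconj, lp.coeFn_smul, Pi.smul_apply,
      smul_eq_mul, coe_expChar] at h1
    have h2 := (hasSum_wienerSeries k hsum).mapL (BoundedContinuousFunction.evalCLM ℂ x)
    simp only [BoundedContinuousFunction.evalCLM_apply, BoundedContinuousFunction.smul_apply,
      smul_eq_mul] at h2
    rw [BoundedContinuousFunction.smul_apply, smul_eq_mul, mul_comm]
    refine h2.unique ?_
    simpa only [mul_comm] using h1
  have h3 := bohrCoeff_wienerSeries k hsum (q.2.1 - p.2.1)
  rw [hw, bohrCoeff_smul k _ (apExp_mem k _), bohrCoeff_apExp, if_pos rfl, mul_one] at h3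
  rw [h3]
  exact hle _

end InverseDecay

section Halfspaces

variable {k n : ℕ} {S : Set (Fin k → ℝ)}

theorem IsHalfspace.zero_mem (hS : IsHalfspace k S) : (0 : Fin k → ℝ) ∈ S := by
  have h : (0 : Fin k → ℝ) ∈ S ∩ -S := by rw [hS.inter]; rfl
  exact h.1

theorem IsHalfspace.eq_zero (hS : IsHalfspace k S) {x : Fin k → ℝ} (hx : x ∈ S)
    (hx' : -x ∈ S) : x = 0 := by
  have h : x ∈ S ∩ -S := ⟨hx, hx'⟩
  rwa [hS.inter] at h

theorem IsHalfspace.mem_or_neg_mem (hS : IsHalfspace k S) (x : Fin k → ℝ) : x ∈ S ∨ -x ∈ S := by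
  have h : x ∈ S ∪ -S := by rw [hS.union]; trivial
  exact h

/-- The submonoid `Σ ∩ S`. -/
def IsHalfspace.plus (hS : IsHalfspace k S) (Sg : AddSubgroup (Fin k → ℝ)) :
    AddSubmonoid (Fin k → ℝ) where
  carrier := ↑Sg ∩ S
  add_mem' hx hy := ⟨Sg.add_mem hx.1 hy.1, hS.add_mem _ hx.2 _ hy.2⟩
  zero_mem' := ⟨Sg.zero_mem, hS.zero_mem⟩

/-- The submonoid `Σ ∩ (-S)`. -/
def IsHalfspace.minus (hS : IsHalfspace k S) (Sg : AddSubgroup (Fin k → ℝ)) :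
    AddSubmonoid (Fin k → ℝ) where
  carrier := ↑Sg ∩ -S
  add_mem' hx hy := ⟨Sg.add_mem hx.1 hy.1, by
    rw [Set.mem_neg, neg_add]
    exact hS.add_mem _ hx.2 _ hy.2⟩
  zero_mem' := ⟨Sg.zero_mem, by rw [Set.mem_neg, neg_zero]; exact hS.zero_mem⟩

theorem neg_coe_inter (Sg : AddSubgroup (Fin k → ℝ)) (S : Set (Fin k → ℝ)) :
    -(↑Sg ∩ S : Set (Fin k → ℝ)) = ↑Sg ∩ -S := by
  ext x
  simp

theorem APWmem.star {Δ : Set (Fin k → ℝ)} {f : APB k} (hf : APWmem k Δ f) :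
    APWmem k (-Δ) (star f) := by
  have hf' := (APmem_iff k).1 hf.1
  refine ⟨(APmem_iff k).2 ⟨star_mem_APalg k hf'.1, fun x hx => ?_⟩, ?_⟩
  · rw [bohrCoeff_star k hf'.1, hf'.2 _ hx, star_zero]
  · simp only [bohrCoeff_star k hf'.1, norm_star]
    exact (Equiv.neg (Fin k → ℝ)).summable_iff.2 hf.2

/-- A function with spectrum in `S ∩ (-S)` is constant. -/
theorem IsHalfspace.eq_algebraMap (hS : IsHalfspace k S) {Sg Sg' : AddSubgroup (Fin k → ℝ)}
    {f : APB k} (h1 : f ∈ apSub k (hS.plus Sg)) (h2 : f ∈ apSub k (hS.minus Sg')) :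
    f = algebraMap ℂ (APB k) (bohrCoeff k f 0) := by
  refine eq_of_bohrCoeff k h1.1 ((APalg k).algebraMap_mem _) fun x => ?_
  rw [bohrCoeff_algebraMap]
  split_ifs with hx
  · rw [hx]
  · by_contra h
    exact hx (hS.eq_zero (h1.2 h).2 (h2.2 h).2)

/-- The mean is multiplicative on `AP^k_{Σ∩S}`. -/
theorem IsHalfspace.mean_mul (hS : IsHalfspace k S) {Sg : AddSubgroup (Fin k → ℝ)}
    {f g : APB k} (hf : f ∈ apSub k (hS.plus Sg)) (hg : g ∈ apSub k (hS.plus Sg)) :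
    bohrCoeff k ⇑(f * g) 0 = bohrCoeff k f 0 * bohrCoeff k g 0 := by
  have hf' := (APmem_iff k).1 hf
  have hg' := (APmem_iff k).1 hg
  refine (hasSum_bohrCoeff_mul k hf.1 hg.1 0).unique ?_
  rw [mul_comm]
  convert hasSum_single (0 : Fin k → ℝ) fun x hx => ?_ using 2
  · rw [sub_zero]
  · by_cases hxm : x ∈ hS.plus Sg
    · rw [hf'.2 (0 - x), mul_zero]
      intro h
      rw [zero_sub] at h
      exact hx (hS.eq_zero hxm.2 h.2)
    · rw [hg'.2 x hxm, zero_mul]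

end Halfspaces

section Corner

variable {k n : ℕ} {S : Set (Fin k → ℝ)}

/-- A finite set of positive elements is bounded below by a positive element. -/
theorem IsHalfspace.exists_lower_bound (hS : IsHalfspace k S) {Sg : AddSubgroup (Fin k → ℝ)}
    {F : Finset (Fin k → ℝ)} (hF : F.Nonempty) (h : ∀ x ∈ F, x ∈ S ∩ ↑Sg ∧ x ≠ 0) :
    ∃ s ∈ S ∩ ↑Sg, s ≠ 0 ∧ ∀ x ∈ F, x - s ∈ S := by
  induction hF using Finset.Nonempty.cons_induction with
  | singleton a =>
    have ha := h a (Finset.mem_singleton_self a)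
    refine ⟨a, ha.1, ha.2, fun x hx => ?_⟩
    rw [Finset.mem_singleton.1 hx, sub_self]
    exact hS.zero_mem
  | cons a F haF hF ih =>
    obtain ⟨s, hs, hs0, hsF⟩ := ih fun x hx => h x (Finset.mem_cons_of_mem hx)
    have ha := h a (Finset.mem_cons_self a F)
    rcases hS.mem_or_neg_mem (a - s) with has | has
    · refine ⟨s, hs, hs0, fun x hx => ?_⟩
      rcases Finset.mem_cons.1 hx with rfl | hx
      exacts [has, hsF x hx]
    · refine ⟨a, ha.1, ha.2, fun x hx => ?_⟩
      rcases Finset.mem_cons.1 hx with rfl | hx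
      · rw [sub_self]
        exact hS.zero_mem
      · have := hS.add_mem _ (hsF x hx) _ has
        rwa [neg_sub, sub_add_sub_cancel] at this

theorem norm_le_of_shift {Λ : Set (Fin k → ℝ)} (hΛ : ∀ x ∈ Λ, ∀ y ∈ Λ, x + y ∈ Λ)
    {A : Matrix (Fin n) (Fin n) (APB k)}
    {T V : SqSum (Fin n × Λ) →L[ℂ] SqSum (Fin n × Λ)} (hT : IsToeplitz k Λ A T)
    (hVT : V * T = 1) {v : SqSum (Fin n × Λ)} {s : Fin k → ℝ} (hs : s ∈ Λ)
    (hTv : ∀ p : Fin n × Λ, T v (p.1, ⟨p.2.1 + s, hΛ _ p.2.2 _ hs⟩) = 0)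
    {w : SqSum (Fin n × Λ)} (hw : ∀ p, w p ≠ 0 → p.2.1 - s ∈ Λ) :
    ‖v‖ ≤ (‖V‖ * ‖T‖ + 1) * ‖v - w‖ := by
  let f : Fin n × Λ → Fin n × Λ := fun p => (p.1, ⟨p.2.1 + s, hΛ _ p.2.2 _ hs⟩)
  have hf : Function.Injective f := fun p q h =>
    Prod.ext (congrArg (fun x => x.1) h :)
      (Subtype.ext (add_left_injective s (congrArg (fun x => x.2.1) h :)))
  have hcomm : ∀ x, sqPull f hf (T (sqPush f hf x)) = T x := by
    have : (sqPull f hf).comp (T.comp (sqPush f hf)) = T := by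
      refine sqSum_clm_ext_entries fun p q => ?_
      rw [ContinuousLinearMap.comp_apply, ContinuousLinearMap.comp_apply, sqPull_apply,
        sqPush_stdVec, hT, hT]
      simp [f]
    exact DFunLike.congr_fun this
  have hpp : sqPush f hf (sqPull f hf w) = w := by
    refine lp.ext (funext fun q => ?_)
    by_cases hq : q.2.1 - s ∈ Λ
    · have : q = f (q.1, ⟨q.2.1 - s, hq⟩) := by simp [f]
      rw [this, sqPush_apply, sqPull_apply]
    · rw [sqPush_apply_of_notMem f hf]
      · exact (not_not.1 (mt (hw q) hq)).symm
      · rintro i rfl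
        exact hq (by simp [f])
  have hzero : sqPull f hf (T v) = 0 := lp.ext (funext fun p => by
    rw [sqPull_apply]
    exact hTv p)
  have hpull : sqPull f hf w = -(V (sqPull f hf (T (v - w)))) := by
    have h1 : T (sqPull f hf w) = -(sqPull f hf (T (v - w))) := by
      rw [← hcomm (sqPull f hf w), hpp, map_sub, map_sub, hzero, zero_sub, neg_neg]
    rw [← map_neg, ← h1, ← mul_apply_eq_comp, hVT, one_apply_eq_self]
  have hpl : ∀ x, ‖sqPull f hf x‖ ≤ ‖x‖ := fun x =>
    ((sqPull f hf).le_opNorm x).trans (mul_le_of_le_one_left (norm_nonneg x) (norm_sqPull_le f hf))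
  have hwn : ‖w‖ ≤ ‖V‖ * ‖T‖ * ‖v - w‖ := by
    calc ‖w‖ = ‖sqPull f hf w‖ := by rw [← norm_sqPush f hf (sqPull f hf w), hpp]
      _ = ‖V (sqPull f hf (T (v - w)))‖ := by rw [hpull, norm_neg]
      _ ≤ ‖V‖ * ‖sqPull f hf (T (v - w))‖ := V.le_opNorm _
      _ ≤ ‖V‖ * (‖T‖ * ‖v - w‖) := by
        gcongr
        exact (hpl _).trans (T.le_opNorm _)
      _ = ‖V‖ * ‖T‖ * ‖v - w‖ := by ring
  calc ‖v‖ = ‖w + (v - w)‖ := by rw [add_sub_cancel]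
    _ ≤ ‖w‖ + ‖v - w‖ := norm_add_le _ _
    _ ≤ (‖V‖ * ‖T‖ + 1) * ‖v - w‖ := by linarith

theorem IsToeplitz.eq_zero_of_corner (hS : IsHalfspace k S) {Sg : AddSubgroup (Fin k → ℝ)}
    {A : Matrix (Fin n) (Fin n) (APB k)}
    {T V : SqSum (Fin n × ↥(S ∩ ↑Sg)) →L[ℂ] SqSum (Fin n × ↥(S ∩ ↑Sg))}
    (hT : IsToeplitz k (S ∩ ↑Sg) A T) (hVT : V * T = 1) {v : SqSum (Fin n × ↥(S ∩ ↑Sg))}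
    (hv : ∀ p, p.2.1 = 0 → v p = 0) (hTv : ∀ p, p.2.1 ≠ 0 → T v p = 0) : v = 0 := by
  have hΛ : ∀ x ∈ S ∩ (Sg : Set (Fin k → ℝ)), ∀ y ∈ S ∩ (Sg : Set (Fin k → ℝ)),
      x + y ∈ S ∩ (Sg : Set (Fin k → ℝ)) := fun x hx y hy =>
    ⟨hS.add_mem _ hx.1 _ hy.1, Sg.add_mem hx.2 hy.2⟩
  have hbound : ∀ s : Finset (Fin n × ↥(S ∩ (Sg : Set (Fin k → ℝ)))),
      ‖v‖ ≤ (‖V‖ * ‖T‖ + 1) * ‖v - ∑ p ∈ s, v p • stdVec p‖ := by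
    intro s
    set w : SqSum (Fin n × ↥(S ∩ (Sg : Set (Fin k → ℝ)))) := ∑ p ∈ s, v p • stdVec p with hw
    have hwp : ∀ p, w p ≠ 0 → p ∈ s ∧ p.2.1 ≠ 0 := by
      intro p hp
      have hval : w p = if p ∈ s then v p else 0 := by
        simp only [hw, lp.coeFn_sum, Finset.sum_apply, lp.coeFn_smul, Pi.smul_apply, stdVec_apply,
          smul_eq_mul, mul_ite, mul_one, mul_zero, Finset.sum_ite_eq]
      rw [hval] at hp
      by_cases hps : p ∈ s
      · rw [if_pos hps] at hp
        exact ⟨hps, fun h => hp (hv p h)⟩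
      · rw [if_neg hps] at hp
        exact absurd rfl hp
    let F : Finset (Fin k → ℝ) := (s.image fun p => p.2.1).filter fun x => x ≠ 0
    have hF : ∀ x ∈ F, x ∈ S ∩ (Sg : Set (Fin k → ℝ)) ∧ x ≠ 0 := by
      intro x hx
      obtain ⟨hx, hx0⟩ := Finset.mem_filter.1 hx
      obtain ⟨p, -, rfl⟩ := Finset.mem_image.1 hx
      exact ⟨p.2.2, hx0⟩
    have hpF : ∀ p, w p ≠ 0 → p.2.1 ∈ F := fun p hp =>
      Finset.mem_filter.2 ⟨Finset.mem_image_of_mem _ (hwp p hp).1, (hwp p hp).2⟩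
    rcases F.eq_empty_or_nonempty with hFe | hFn
    · have hw0 : w = 0 := by
        refine lp.ext (funext fun p => ?_)
        by_contra hp
        have := hpF p hp
        simp [hFe] at this
      rw [hw0, sub_zero]
      exact le_mul_of_one_le_left (norm_nonneg v) (by
        have := mul_nonneg V.opNorm_nonneg T.opNorm_nonneg
        linarith)
    · obtain ⟨t, ht, ht0, htF⟩ := hS.exists_lower_bound hFn hF
      refine norm_le_of_shift hΛ hT hVT ht (fun p => hTv _ fun h => ht0 ?_) fun p hp =>
        ⟨htF _ (hpF p hp), Sg.sub_mem p.2.2.2 ht.2⟩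
      have h' : p.2.1 + t = 0 := h
      refine hS.eq_zero ht.1 ?_
      rw [← eq_neg_of_add_eq_zero_left h']
      exact p.2.2.1
  have hlim : Tendsto (fun s => (‖V‖ * ‖T‖ + 1) * ‖v - ∑ p ∈ s, v p • stdVec p‖) atTop
      (nhds ((‖V‖ * ‖T‖ + 1) * ‖v - v‖)) :=
    ((tendsto_const_nhds.sub (hasSum_stdVec v)).norm).const_mul _
  rw [sub_self, norm_zero, mul_zero] at hlim
  exact norm_le_zero_iff.1 (ge_of_tendsto' hlim hbound)

/-- The frequency `0` as an element of `S ∩ Σ`. -/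
def IsHalfspace.origin (hS : IsHalfspace k S) (Sg : AddSubgroup (Fin k → ℝ)) :
    ↥(S ∩ (Sg : Set (Fin k → ℝ))) :=
  ⟨0, hS.zero_mem, Sg.zero_mem⟩

theorem IsToeplitz.isUnit_corner (hS : IsHalfspace k S) {Sg : AddSubgroup (Fin k → ℝ)}
    {A : Matrix (Fin n) (Fin n) (APB k)}
    {T V : SqSum (Fin n × ↥(S ∩ ↑Sg)) →L[ℂ] SqSum (Fin n × ↥(S ∩ ↑Sg))}
    (hT : IsToeplitz k (S ∩ ↑Sg) A T) (hVT : V * T = 1) (hTV : T * V = 1) :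
    IsUnit (Matrix.of fun i j => V (stdVec (j, hS.origin Sg)) (i, hS.origin Sg)) := by
  rw [← Matrix.mulVec_injective_iff_isUnit]
  refine (injective_iff_map_eq_zero (Matrix.mulVecLin _)).2 fun u hu => ?_
  let x : SqSum (Fin n × ↥(S ∩ (Sg : Set (Fin k → ℝ)))) :=
    ∑ j, u j • stdVec (j, hS.origin Sg)
  have hx : ∀ p, x p = if p.2 = hS.origin Sg then u p.1 else 0 := by
    intro p
    simp only [x, lp.coeFn_sum, Finset.sum_apply, lp.coeFn_smul, Pi.smul_apply, stdVec_apply,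
      Prod.ext_iff, smul_eq_mul, mul_ite, mul_one, mul_zero]
    by_cases h : p.2 = hS.origin Sg <;> simp [h]
  have hTVx : T (V x) = x := by rw [← mul_apply_eq_comp, hTV, one_apply_eq_self]
  have hV0 : V x = 0 := by
    refine hT.eq_zero_of_corner hS hVT (fun p hp => ?_) fun p hp => ?_
    · have hp' : p = (p.1, hS.origin Sg) := Prod.ext rfl (Subtype.ext hp)
      have := congrFun hu p.1
      rw [hp']
      simp only [x, map_sum, map_smul, lp.coeFn_sum, Finset.sum_apply, lp.coeFn_smul,
        Pi.smul_apply, smul_eq_mul]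
      simpa [Matrix.mulVec, dotProduct, mul_comm] using this
    · rw [hTVx, hx, if_neg fun h => hp (congrArg Subtype.val h)]
  ext j
  have := hx (j, hS.origin Sg)
  rw [← hTVx, hV0, map_zero, if_pos rfl] at this
  exact this.symm

end Corner

section WienerFactorization

variable {k n : ℕ} {S : Set (Fin k → ℝ)}

theorem APWmem.mono {Δ Δ' : Set (Fin k → ℝ)} (h : Δ ⊆ Δ') {f : APB k} (hf : APWmem k Δ f) :
    APWmem k Δ' f :=
  ⟨⟨hf.1.1, hf.1.2.trans h⟩, hf.2⟩

/-- The columns of the inverse of a Toeplitz operator with symbol `A` solve `A Φ = N` with `Φ`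
analytic and `N` antianalytic. -/
theorem IsToeplitz.exists_column_solution (hS : IsHalfspace k S) {Sg : AddSubgroup (Fin k → ℝ)}
    {A : Matrix (Fin n) (Fin n) (APB k)} (hA : ∀ i j, APWmem k Sg (A i j))
    {T V : SqSum (Fin n × ↥(S ∩ ↑Sg)) →L[ℂ] SqSum (Fin n × ↥(S ∩ ↑Sg))}
    (hT : IsToeplitz k (S ∩ ↑Sg) A T) (hVT : V * T = 1) (hTV : T * V = 1) :
    ∃ Φ : Matrix (Fin n) (Fin n) (APB k), (∀ i j, Φ i j ∈ apwSub k (hS.plus Sg)) ∧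
      (∀ i j, (A * Φ) i j ∈ apwSub k (hS.minus Sg)) ∧
      (∀ i j, bohrCoeff k ((A * Φ) i j) 0 = if i = j then 1 else 0) ∧
      ∀ i j, bohrCoeff k (Φ i j) 0 = V (stdVec (j, hS.origin Sg)) (i, hS.origin Sg) := by
  classical
  obtain ⟨b, hb, hVb⟩ := hT.exists_inverse_decay (fun i j => (hA i j).2) hVT hTV
  let a : Fin n → Fin n → (Fin k → ℝ) → ℂ := fun i j g =>
    if h : g ∈ S ∩ (Sg : Set (Fin k → ℝ)) then V (stdVec (j, hS.origin Sg)) (i, ⟨g, h⟩) else 0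
  have ha : ∀ i j, Summable fun g => ‖a i j g‖ := by
    intro i j
    refine Summable.of_nonneg_of_le (fun _ => norm_nonneg _) (fun g => ?_) hb.norm
    simp only [a]
    split_ifs with h
    · have := hVb (j, hS.origin Sg) (i, ⟨g, h⟩)
      simp only [IsHalfspace.origin, sub_zero] at this
      exact this.trans (Real.le_norm_self _)
    · rw [norm_zero]
      exact norm_nonneg _
  let Φ : Matrix (Fin n) (Fin n) (APB k) := Matrix.of fun i j => wienerSeries k (a i j)
  have hcoef : ∀ i j g, bohrCoeff k (Φ i j) g = a i j g := fun i j =>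
    bohrCoeff_wienerSeries k (ha i j)
  have hΦ : ∀ i j, Φ i j ∈ apwSub k (hS.plus Sg) := by
    intro i j
    refine ⟨(APmem_iff k).2 ⟨wienerSeries_mem k (ha i j), fun x hx => ?_⟩, ?_⟩
    · rw [hcoef]
      exact dif_neg fun h => hx ⟨h.2, h.1⟩
    · simpa only [hcoef] using ha i j
  have hAp : ∀ i j, A i j ∈ APalg k := fun i j => (hA i j).1.1
  have hprod : ∀ i j, ∀ x ∈ S ∩ (Sg : Set (Fin k → ℝ)), bohrCoeff k ((A * Φ) i j) x =
      if i = j ∧ x = 0 then 1 else 0 := by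
    intro i j x hx
    have h1 := hT.apply_eq_bohrCoeff hAp (φ := fun l => Φ l j) (fun l => (hΦ l j).1.1) 0
      (v := V (stdVec (j, hS.origin Sg))) (fun p => by
        rw [sub_zero, hcoef]
        simp only [a]
        rw [dif_pos p.2.2]) (i, ⟨x, hx⟩) (fun l y hy => by
        rw [sub_zero, hcoef]
        simp only [a]
        rw [dif_neg hy, zero_mul])
    rw [← mul_apply_eq_comp, hTV, one_apply_eq_self, stdVec_apply] at h1
    simp only [sub_zero, Prod.mk.injEq, IsHalfspace.origin, Subtype.ext_iff] at h1
    exact h1.symm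
  refine ⟨Φ, hΦ, fun i j => ?_, fun i j => ?_, fun i j => ?_⟩
  · have hW : (A * Φ) i j ∈ apwSub k Sg.toAddSubmonoid :=
      matrix_mul_mem _ hA (fun i j => (hΦ i j).mono fun _ h => h.1) i j
    refine ⟨(APmem_iff k).2 ⟨hW.1.1, fun x hx => ?_⟩, hW.2⟩
    by_cases hxg : x ∈ Sg
    · have hxS : -x ∉ S := fun h => hx ⟨hxg, h⟩
      rw [hprod i j x ⟨(hS.mem_or_neg_mem x).resolve_right hxS, hxg⟩, if_neg]
      rintro ⟨-, rfl⟩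
      exact hxS (by simpa using hS.zero_mem)
    · exact ((APmem_iff k).1 hW.1).2 x hxg
  · rw [hprod i j 0 ⟨hS.zero_mem, Sg.zero_mem⟩]
    simp
  · rw [hcoef]
    exact dif_pos _

theorem conjTranspose_mem_minus (hS : IsHalfspace k S) {Sg : AddSubgroup (Fin k → ℝ)}
    {M : Matrix (Fin n) (Fin n) (APB k)} (hM : ∀ i j, M i j ∈ apwSub k (hS.plus Sg)) (i j : Fin n) :
    M.conjTranspose i j ∈ apwSub k (hS.minus Sg) := by
  have h := (hM j i).star
  change APWmem k (-(↑Sg ∩ S)) _ at h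
  rwa [neg_coe_inter] at h

theorem conjTranspose_mem_plus (hS : IsHalfspace k S) {Sg : AddSubgroup (Fin k → ℝ)}
    {M : Matrix (Fin n) (Fin n) (APB k)} (hM : ∀ i j, M i j ∈ apwSub k (hS.minus Sg))
    (i j : Fin n) : M.conjTranspose i j ∈ apwSub k (hS.plus Sg) := by
  have h := (hM j i).star
  change APWmem k (-(↑Sg ∩ -S)) _ at h
  rwa [neg_coe_inter, neg_neg] at h

/-- An invertible Toeplitz operator yields a canonical factorization in the Wiener algebra. -/
theorem IsToeplitz.exists_factorization (hS : IsHalfspace k S) {Sg : AddSubgroup (Fin k → ℝ)}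
    {G : Matrix (Fin n) (Fin n) (APB k)} (hG : ∀ i j, APWmem k Sg (G i j))
    {T V : SqSum (Fin n × ↥(S ∩ ↑Sg)) →L[ℂ] SqSum (Fin n × ↥(S ∩ ↑Sg))}
    (hT : IsToeplitz k (S ∩ ↑Sg) G.transpose T) (hVT : V * T = 1) (hTV : T * V = 1) :
    ∃ Gp Gm, IsAPWFactorization k S Sg G (fun _ : Fin n => (0 : Fin k → ℝ)) Gp Gm := by
  set A := G.transpose with hAG
  have hA : ∀ i j, APWmem k Sg (A i j) := fun i j => hG j i
  have hA' : ∀ i j, APWmem k Sg (A.conjTranspose i j) := fun i j => by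
    have h := (hA j i).star
    rwa [show -(Sg : Set (Fin k → ℝ)) = Sg by ext; simp] at h
  obtain ⟨Φ, hΦ, hN, -, hΦ0⟩ := hT.exists_column_solution hS hA hVT hTV
  have hadj : ∀ {P Q : SqSum (Fin n × ↥(S ∩ (Sg : Set (Fin k → ℝ)))) →L[ℂ]
      SqSum (Fin n × ↥(S ∩ (Sg : Set (Fin k → ℝ))))}, P * Q = 1 → Q.adjoint * P.adjoint = 1 := by
    intro P Q h
    exact (ContinuousLinearMap.adjoint_comp P Q).symm.trans
      ((congrArg ContinuousLinearMap.adjoint h).trans ContinuousLinearMap.adjoint_id)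
  obtain ⟨Y, hY, hM, hM0, -⟩ := (hT.adjoint fun i j => (hA i j).1.1).exists_column_solution hS hA'
    (hadj hTV) (hadj hVT)
  set C : Matrix (Fin n) (Fin n) ℂ :=
    Matrix.of fun i j => V (stdVec (j, hS.origin Sg)) (i, hS.origin Sg) with hC
  have hCu : IsUnit C := hT.isUnit_corner hS hVT hTV
  set X := Y.conjTranspose with hX
  have hXm : ∀ i j, X i j ∈ apwSub k (hS.minus Sg) := conjTranspose_mem_minus hS hY
  have hP : X * A = (A.conjTranspose * Y).conjTranspose := by
    rw [Matrix.conjTranspose_mul, Matrix.conjTranspose_conjTranspose]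
  have hPp : ∀ i j, (X * A) i j ∈ apwSub k (hS.plus Sg) := by
    rw [hP]
    exact conjTranspose_mem_plus hS hM
  have hP0 : ∀ i j, bohrCoeff k ((X * A) i j) 0 = if i = j then 1 else 0 := by
    intro i j
    rw [hP, Matrix.conjTranspose_apply, bohrCoeff_star k (hM j i).1.1, neg_zero, hM0]
    simp only [eq_comm (a := i)]
    split_ifs <;> simp
  let K : Matrix (Fin n) (Fin n) (APB k) := C.map (algebraMap ℂ (APB k))
  let K' : Matrix (Fin n) (Fin n) (APB k) := C⁻¹.map (algebraMap ℂ (APB k))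
  have hK' : K' * K = 1 := by
    simp only [K, K']
    rw [← Matrix.map_mul, Matrix.nonsing_inv_mul _ ((Matrix.isUnit_iff_isUnit_det _).1 hCu)]
    exact Matrix.map_one _ (map_zero _) (map_one _)
  have hXN : X * (A * Φ) = K := by
    ext1 i j
    have h1 : (X * (A * Φ)) i j ∈ apSub k (hS.plus Sg) := by
      rw [← Matrix.mul_assoc]
      exact (matrix_mul_mem _ hPp hΦ i j).1
    have h2 : (X * (A * Φ)) i j ∈ apSub k (hS.minus Sg) := (matrix_mul_mem _ hXm hN i j).1
    rw [hS.eq_algebraMap h1 h2]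
    simp only [K, Matrix.map_apply, hC, Matrix.of_apply]
    rw [← Matrix.mul_assoc, Matrix.mul_apply, bohrCoeff_sum k _ fun l _ =>
      (APalg k).mul_mem (hPp i l).1.1 (hΦ l j).1.1]
    simp only [hS.mean_mul (hPp i _).1 (hΦ _ j).1, hP0, hΦ0, ite_mul, one_mul, zero_mul,
      Finset.sum_ite_eq, Finset.mem_univ, if_true]
  have hK'mem : ∀ (B : Subalgebra ℂ (APB k)) i j, K' i j ∈ B := fun B i j => B.algebraMap_mem _
  have e1 : Φ * (K' * (X * A)) = 1 := by
    rw [mul_eq_one_comm, Matrix.mul_assoc, Matrix.mul_assoc, hXN, hK']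
  have e2 : A * Φ * (K' * X) = 1 := by
    rw [mul_eq_one_comm, Matrix.mul_assoc, hXN, hK']
  refine ⟨(K' * (X * A)).transpose, (A * Φ).transpose, fun i j => ?_, fun i j => hN j i,
    fun _ => Sg.zero_mem, ⟨Φ.transpose, fun i j => hΦ j i, ?_⟩,
    ⟨(K' * X).transpose, fun i j => ?_, ?_⟩, ?_⟩
  · exact matrix_mul_mem _ (hK'mem _) hPp j i
  · rw [← Matrix.transpose_mul, e1, Matrix.transpose_one]
  · exact matrix_mul_mem _ (hK'mem _) hXm j i
  · rw [← Matrix.transpose_mul, e2, Matrix.transpose_one]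
  · simp only [apExp_zero]
    rw [Matrix.diagonal_one, Matrix.mul_one, ← Matrix.transpose_mul, Matrix.mul_assoc,
      e1, Matrix.mul_one, hAG, Matrix.transpose_transpose]

end WienerFactorization

section CanonicalFactorization

variable {k n : ℕ} {S : Set (Fin k → ℝ)}

theorem eq_mul_of_diagonal_apExp_zero {G Gp Gm : Matrix (Fin n) (Fin n) (APB k)}
    (h : G = Gp * Matrix.diagonal (fun _ => apExp k 0) * Gm) : G = Gp * Gm := by
  rwa [apExp_zero, Matrix.diagonal_one, Matrix.mul_one] at h

/-- A canonical factorization of `G` makes the Toeplitz operator of `Gᵀ` invertible. -/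
theorem IsAPFactorization.exists_inverse (hS : IsHalfspace k S)
    {G Gp Gm : Matrix (Fin n) (Fin n) (APB k)}
    (hG : IsAPFactorization k S Set.univ G (fun _ : Fin n => (0 : Fin k → ℝ)) Gp Gm)
    {T : SqSum (Fin n × ↥(S ∩ Set.univ)) →L[ℂ] SqSum (Fin n × ↥(S ∩ Set.univ))}
    (hT : IsToeplitz k (S ∩ Set.univ) G.transpose T) :
    ∃ V : SqSum (Fin n × ↥(S ∩ Set.univ)) →L[ℂ] SqSum (Fin n × ↥(S ∩ Set.univ)),
      V * T = 1 ∧ T * V = 1 := by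
  obtain ⟨hGp, hGm, -, ⟨Gpr, hGpr, hpr⟩, ⟨Gml, hGml, hml⟩, hfac⟩ := hG
  replace hfac := eq_mul_of_diagonal_apExp_zero hfac
  have hplus : ∀ {F F' : Matrix (Fin n) (Fin n) (APB k)}
      {R R' : SqSum (Fin n × ↥(S ∩ Set.univ)) →L[ℂ] SqSum (Fin n × ↥(S ∩ Set.univ))},
      (∀ i j, F i j ∈ APalg k) → (∀ i j, APmem k (Set.univ ∩ S) (F' i j)) →
      IsToeplitz k (S ∩ Set.univ) F.transpose R → IsToeplitz k (S ∩ Set.univ) F'.transpose R' →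
      IsToeplitz k (S ∩ Set.univ) (F' * F).transpose (R * R') := by
    intro F F' R R' hF hF' hR hR'
    rw [Matrix.transpose_mul]
    refine hR.mul (fun i j => hF j i) (fun i j => (hF' j i).1) hR' fun i j l μ hμ ν _ x hx => ?_
    refine mul_eq_zero_of_left (((APmem_iff k).1 (hF' j l)).2 _ fun h => ?_) _
    have := hS.add_mem _ h.2 _ hμ.1
    rw [sub_add_cancel] at this
    exact hx ⟨this, trivial⟩
  have hminus : ∀ {F F' : Matrix (Fin n) (Fin n) (APB k)}
      {R R' : SqSum (Fin n × ↥(S ∩ Set.univ)) →L[ℂ] SqSum (Fin n × ↥(S ∩ Set.univ))},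
      (∀ i j, APmem k (Set.univ ∩ -S) (F i j)) → (∀ i j, F' i j ∈ APalg k) →
      IsToeplitz k (S ∩ Set.univ) F.transpose R → IsToeplitz k (S ∩ Set.univ) F'.transpose R' →
      IsToeplitz k (S ∩ Set.univ) (F' * F).transpose (R * R') := by
    intro F F' R R' hF hF' hR hR'
    rw [Matrix.transpose_mul]
    refine hR.mul (fun i j => (hF j i).1) (fun i j => hF' j i) hR' fun i j l μ _ ν hν x hx => ?_
    refine mul_eq_zero_of_right _ (((APmem_iff k).1 (hF l i)).2 _ fun h => ?_)
    have := hS.add_mem _ h.2 _ hν.1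
    rw [neg_sub, sub_add_cancel] at this
    exact hx ⟨this, trivial⟩
  obtain ⟨Tp, hTp, -⟩ := exists_isToeplitz (S ∩ Set.univ) (F := Gp.transpose)
    fun i j => (hGp j i).1
  obtain ⟨Tpr, hTpr, -⟩ := exists_isToeplitz (S ∩ Set.univ) (F := Gpr.transpose)
    fun i j => (hGpr j i).1
  obtain ⟨Tm, hTm, -⟩ := exists_isToeplitz (S ∩ Set.univ) (F := Gm.transpose)
    fun i j => (hGm j i).1
  obtain ⟨Tml, hTml, -⟩ := exists_isToeplitz (S ∩ Set.univ) (F := Gml.transpose)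
    fun i j => (hGml j i).1
  have h1 : IsToeplitz k (S ∩ Set.univ) (1 : Matrix (Fin n) (Fin n) (APB k)).transpose 1 := by
    rw [Matrix.transpose_one]
    exact isToeplitz_one _
  have hTfac : T = Tm * Tp := by
    rw [hfac] at hT
    exact hT.unique (hplus (fun i j => (hGm i j).1) hGp hTm hTp)
  have e1 : Tpr * Tp = 1 := by
    have := hplus (fun i j => (hGpr i j).1) hGp hTpr hTp
    rw [hpr] at this
    exact this.unique h1
  have e2 : Tp * Tpr = 1 := by
    have := hplus (fun i j => (hGp i j).1) hGpr hTp hTpr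
    rw [mul_eq_one_comm.1 hpr] at this
    exact this.unique h1
  have e3 : Tm * Tml = 1 := by
    have := hminus hGm (fun i j => (hGml i j).1) hTm hTml
    rw [hml] at this
    exact this.unique h1
  have e4 : Tml * Tm = 1 := by
    have := hminus hGml (fun i j => (hGm i j).1) hTml hTm
    rw [mul_eq_one_comm.1 hml] at this
    exact this.unique h1
  refine ⟨Tpr * Tml, ?_, ?_⟩
  · rw [hTfac, mul_assoc, ← mul_assoc Tml, e4, one_mul, e1]
  · rw [hTfac, mul_assoc, ← mul_assoc Tp, e2, one_mul, e3]

theorem eq_zero_of_mul_apExp (hS : IsHalfspace k S) {Sg Sg' : AddSubgroup (Fin k → ℝ)}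
    {f g : APB k} (hf : f ∈ apSub k (hS.plus Sg)) (hg : g ∈ apSub k (hS.minus Sg'))
    {a : Fin k → ℝ} (ha : a ∈ S) (ha0 : a ≠ 0) (h : g = apExp k a * f) : g = 0 := by
  refine eq_of_bohrCoeff k hg.1 (APalg k).zero_mem fun x => ?_
  rw [BoundedContinuousFunction.coe_zero]
  have hz : bohrCoeff k (0 : (Fin k → ℝ) → ℂ) x = 0 := bohrCoeff_zero k x
  rw [hz]
  by_contra hx
  have hx1 : -x ∈ S := (hg.2 hx).2
  rw [h, bohrCoeff_apExp_mul k hf.1] at hx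
  have hx2 : x - a ∈ S := (hf.2 hx).2
  refine ha0 (hS.eq_zero ha ?_)
  have := hS.add_mem _ hx1 _ hx2
  rwa [← sub_eq_neg_add, sub_sub_cancel_left] at this

/-- Every factorization of a function with a canonical Wiener factorization is itself a canonical
Wiener factorization. -/
theorem IsAPWFactorization.of_isAPFactorization (hS : IsHalfspace k S)
    {Sg : AddSubgroup (Fin k → ℝ)} {G Fp Fm Gp Gm : Matrix (Fin n) (Fin n) (APB k)}
    {lam : Fin n → (Fin k → ℝ)}
    (hF : IsAPWFactorization k S Sg G (fun _ : Fin n => (0 : Fin k → ℝ)) Fp Fm)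
    (hG : IsAPFactorization k S Set.univ G lam Gp Gm) :
    (lam = fun _ => (0 : Fin k → ℝ)) ∧ IsAPWFactorization k S Sg G lam Gp Gm := by
  obtain ⟨hFp, hFm, -, ⟨Fpr, hFpr, hpr⟩, ⟨Fml, hFml, hml⟩, hfac⟩ := hF
  replace hfac := eq_mul_of_diagonal_apExp_zero hfac
  obtain ⟨hGp, hGm, -, ⟨Gpr, hGpr, hgpr⟩, ⟨Gml, hGml, hgml⟩, hgfac⟩ := hG
  set D : Matrix (Fin n) (Fin n) (APB k) := Matrix.diagonal fun j => apExp k (lam j) with hD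
  have hp : ∀ {f}, APWmem k (↑Sg ∩ S) f → f ∈ apSub k (hS.plus ⊤) := fun hf =>
    ⟨hf.1.1, hf.1.2.trans fun _ h => ⟨trivial, h.2⟩⟩
  have hm : ∀ {f}, APWmem k (↑Sg ∩ -S) f → f ∈ apSub k (hS.minus ⊤) := fun hf =>
    ⟨hf.1.1, hf.1.2.trans fun _ h => ⟨trivial, h.2⟩⟩
  have hpr' := mul_eq_one_comm.1 hpr
  have hml' := mul_eq_one_comm.1 hml
  have hgpr' := mul_eq_one_comm.1 hgpr
  have hgml' := mul_eq_one_comm.1 hgml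
  have hAp : ∀ i j, (Fpr * Gp) i j ∈ apSub k (hS.plus ⊤) :=
    matrix_mul_mem _ (fun i j => hp (hFpr i j)) hGp
  have hAp' : ∀ i j, (Gpr * Fp) i j ∈ apSub k (hS.plus ⊤) :=
    matrix_mul_mem _ hGpr fun i j => hp (hFp i j)
  have hBm : ∀ i j, (Fm * Gml) i j ∈ apSub k (hS.minus ⊤) :=
    matrix_mul_mem _ (fun i j => hm (hFm i j)) hGml
  have hBm' : ∀ i j, (Gm * Fml) i j ∈ apSub k (hS.minus ⊤) :=
    matrix_mul_mem _ hGm fun i j => hm (hFml i j)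
  have hAB : Fm * Gml = Fpr * Gp * D := by
    calc Fm * Gml = Fpr * Fp * Fm * Gml := by rw [hpr', Matrix.one_mul]
      _ = Fpr * G * Gml := by rw [Matrix.mul_assoc Fpr, ← hfac]
      _ = Fpr * Gp * D * (Gm * Gml) := by rw [hgfac]; simp only [Matrix.mul_assoc]
      _ = Fpr * Gp * D := by rw [hgml', Matrix.mul_one]
  have hAB' : Gpr * Fp = D * (Gm * Fml) := by
    calc Gpr * Fp = Gpr * Fp * (Fm * Fml) := by rw [hml', Matrix.mul_one]
      _ = Gpr * G * Fml := by rw [hfac]; simp only [Matrix.mul_assoc]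
      _ = Gpr * Gp * D * Gm * Fml := by rw [hgfac]; simp only [Matrix.mul_assoc]
      _ = D * (Gm * Fml) := by rw [hgpr', Matrix.one_mul, Matrix.mul_assoc]
  have hBB : (Gm * Fml) * (Fm * Gml) = 1 := by
    rw [Matrix.mul_assoc, ← Matrix.mul_assoc Fml, hml, Matrix.one_mul, hgml']
  have hlam : ∀ j, lam j = 0 := by
    intro j
    by_contra hj
    have hone : ((Gm * Fml) * (Fm * Gml)) j j = 1 := by rw [hBB, Matrix.one_apply_eq]
    rw [Matrix.mul_apply] at hone
    have hne : (0 : APB k) ≠ 1 := fun h => zero_ne_one (DFunLike.congr_fun h (0 : Fin k → ℝ))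
    refine hne ((Finset.sum_eq_zero fun i _ => ?_).symm.trans hone)
    rcases hS.mem_or_neg_mem (lam j) with hjS | hjS
    · rw [eq_zero_of_mul_apExp hS (hAp i j) (hBm i j) hjS hj, mul_zero]
      rw [hAB, hD, Matrix.mul_diagonal, mul_comm]
    · rw [eq_zero_of_mul_apExp hS (hAp' j i) (hBm' j i) hjS (neg_ne_zero.2 hj), zero_mul]
      rw [hAB', hD, Matrix.diagonal_mul, ← mul_assoc, ← apExp_add, neg_add_cancel, apExp_zero,
        one_mul]
  have hD1 : D = 1 := by
    simp only [hD, hlam, apExp_zero, Matrix.diagonal_one]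
  rw [hD1, Matrix.mul_one] at hAB
  rw [hD1, Matrix.one_mul] at hAB'
  have hconst : ∀ (B : Subalgebra ℂ (APB k)) i j, (Fpr * Gp) i j ∈ B := by
    intro B i j
    rw [hS.eq_algebraMap (hAp i j) (hAB ▸ hBm i j)]
    exact B.algebraMap_mem _
  have hconst' : ∀ (B : Subalgebra ℂ (APB k)) i j, (Gpr * Fp) i j ∈ B := by
    intro B i j
    rw [hS.eq_algebraMap (hAp' i j) (hAB' ▸ hBm' i j)]
    exact B.algebraMap_mem _
  refine ⟨funext hlam, ?_, ?_, fun j => ?_, ⟨Gpr, ?_, hgpr⟩, ⟨Gml, ?_, hgml⟩, hgfac⟩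
  · have h : Gp = Fp * (Fpr * Gp) := by rw [← Matrix.mul_assoc, hpr, Matrix.one_mul]
    rw [h]
    exact matrix_mul_mem (apwSub k (hS.plus Sg)) hFp (hconst _)
  · have h : Gm = Gpr * Fp * Fm := by rw [hAB', Matrix.mul_assoc, hml, Matrix.mul_one]
    rw [h]
    exact matrix_mul_mem (apwSub k (hS.minus Sg)) (hconst' _) hFm
  · rw [hlam]
    exact Sg.zero_mem
  · have h : Gpr = Gpr * Fp * Fpr := by rw [Matrix.mul_assoc, hpr, Matrix.mul_one]
    rw [h]
    exact matrix_mul_mem (apwSub k (hS.plus Sg)) (hconst' _) hFpr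
  · have h : Gml = Fml * (Fpr * Gp) := by rw [← hAB, ← Matrix.mul_assoc, hml, Matrix.one_mul]
    rw [h]
    exact matrix_mul_mem (apwSub k (hS.minus Sg)) hFml (hconst _)

theorem IsAPWFactorization.isAPFactorization_univ {Sg : Set (Fin k → ℝ)}
    {G Gp Gm : Matrix (Fin n) (Fin n) (APB k)} {lam : Fin n → (Fin k → ℝ)}
    (h : IsAPWFactorization k S Sg G lam Gp Gm) :
    IsAPFactorization k S Set.univ G lam Gp Gm := by
  obtain ⟨hGp, hGm, -, ⟨Gpr, hGpr, hpr⟩, ⟨Gml, hGml, hml⟩, hfac⟩ := h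
  have hmono : ∀ {R : Set (Fin k → ℝ)} {f}, APWmem k (Sg ∩ R) f → APmem k (Set.univ ∩ R) f :=
    fun hf => ⟨hf.1.1, hf.1.2.trans fun _ h => ⟨trivial, h.2⟩⟩
  exact ⟨fun i j => hmono (hGp i j), fun i j => hmono (hGm i j), fun _ => trivial,
    ⟨Gpr, fun i j => hmono (hGpr i j), hpr⟩, ⟨Gml, fun i j => hmono (hGml i j), hml⟩, hfac⟩

end CanonicalFactorization

/-- **Theorem 4.1.**  Let `S ⊂ ℝ^k` be a halfspace, `Σ` an additive subgroup
of `ℝ^k`, and `G ∈ (APW^k_Σ)^{n×n}`.  Then `G` admits a canonical left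
`(AP_S)_{ℝ^k}` factorization if and only if the Toeplitz operator
`T(Gᵀ)_{S,ℝ^k}` is invertible; in that case `T(Gᵀ)_{S,Σ}` is invertible as
well, and any `(AP_S)_{ℝ^k}` factorization of `G` is automatically a canonical
`(APW_S)_Σ` factorization. -/
theorem canonical_factorization_iff_toeplitz_invertible (k n : ℕ)
    (S : Set (Fin k → ℝ)) (hS : IsHalfspace k S)
    (Sg : AddSubgroup (Fin k → ℝ))
    (G : Matrix (Fin n) (Fin n) (APB k))
    (hG : ∀ i j, APWmem k (↑Sg) (G i j)) :
    ∀ T : BesCol k n (S ∩ Set.univ) →L[ℂ] BesCol k n (S ∩ Set.univ),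
      RepresentsToeplitz k S Set.univ n n G.transpose T →
      (((∃ Gp Gm, IsAPFactorization k S Set.univ G
            (fun _ : Fin n => (0 : Fin k → ℝ)) Gp Gm) ↔ CLMInvertible T) ∧
       ((∃ Gp Gm, IsAPFactorization k S Set.univ G
            (fun _ : Fin n => (0 : Fin k → ℝ)) Gp Gm) →
         ((∀ T' : BesCol k n (S ∩ ↑Sg) →L[ℂ] BesCol k n (S ∩ ↑Sg),
            RepresentsToeplitz k S (↑Sg) n n G.transpose T' → CLMInvertible T') ∧
          (∀ (lam : Fin n → (Fin k → ℝ)) Gp Gm,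
            IsAPFactorization k S Set.univ G lam Gp Gm →
              (lam = fun _ => (0 : Fin k → ℝ)) ∧
              IsAPWFactorization k S (↑Sg) G lam Gp Gm)))) := by
  intro T hT
  rw [representsToeplitz_iff] at hT
  have hsub : ∀ {T' : SqSum (Fin n × ↥(S ∩ (Sg : Set (Fin k → ℝ)))) →L[ℂ]
      SqSum (Fin n × ↥(S ∩ (Sg : Set (Fin k → ℝ))))}, CLMInvertible T →
      IsToeplitz k (S ∩ ↑Sg) G.transpose T' → CLMInvertible T' := by
    rintro T' ⟨V, hVT, hTV⟩ hT'
    have hle : S ∩ (Sg : Set (Fin k → ℝ)) ⊆ S ∩ Set.univ := fun x hx => ⟨hx.1, trivial⟩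
    refine exists_inverse_compression hle (fun i j μ hμ ν hν hν' => ?_)
      hT hVT hTV hT'
    have hνg : ν ∉ Sg := fun h => hν' ⟨hν.1, h⟩
    have hz := ((APmem_iff k).1 (hG j i).1).2
    refine ⟨hz _ fun h => hνg ?_, hz _ fun h => hνg ?_⟩
    · simpa using Sg.add_mem h hμ.2
    · simpa using Sg.sub_mem hμ.2 h
  have hwiener : CLMInvertible T → ∃ Gp Gm, IsAPWFactorization k S Sg G
      (fun _ : Fin n => (0 : Fin k → ℝ)) Gp Gm := by
    intro h
    obtain ⟨T', hT', -⟩ := exists_isToeplitz (S ∩ ↑Sg) (F := G.transpose)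
      fun i j => (hG j i).1.1
    obtain ⟨V', hVT', hTV'⟩ := hsub h hT'
    exact hT'.exists_factorization hS hG hVT' hTV'
  have hinv : (∃ Gp Gm, IsAPFactorization k S Set.univ G
      (fun _ : Fin n => (0 : Fin k → ℝ)) Gp Gm) → CLMInvertible T := by
    rintro ⟨Gp, Gm, h⟩
    exact h.exists_inverse hS hT
  refine ⟨⟨hinv, fun h => ?_⟩, fun h => ⟨fun T' hT' => ?_, fun lam Gp Gm hlam => ?_⟩⟩
  · obtain ⟨Gp, Gm, hF⟩ := hwiener h
    exact ⟨Gp, Gm, hF.isAPFactorization_univ⟩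
  · exact hsub (hinv h) (representsToeplitz_iff.1 hT')
  · obtain ⟨Fp, Fm, hF⟩ := hwiener (hinv h)
    exact hF.of_isAPFactorization hS hlam
end
end
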